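/- For simple random walk on Z^2 with anticlockwise rotors, hitting probability h = h_{b,c}, and the spiral initial rotor configuration r((x,y)) = floor(1/2 + (2/pi) arg(x - 1/2, y - 1/2)) mod 4, the rotor walk started at a (with b,c made into sinks returning to a) satisfies |h(a) - n_t(b)/n| <= C (ln n)/n where n = n_t(b)+n_t(c), and moreover t <= C' n^3, for constants C, C' depending on a,b,c. -/

import Mathlib

open scoped BigOperators Classical

/-- `(x, r)` is a rotor walk for the rotor mechanism `(d, succ)`.  Rotor values are
`0`-based: rotor value `j` at `u` means the rotor points to `succ u j`
(corresponding to `u^(j+1)` in `1`-based notation).  At each step the rotor at the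
current particle position is incremented cyclically and the particle moves in the
new rotor direction. -/
def IsRotorWalk {V : Type*} (d : V → ℕ) (succ : V → ℕ → V)
    (x : ℕ → V) (r : ℕ → V → ℕ) : Prop :=
  (∀ v, r 0 v < d v) ∧
  (∀ t, r (t + 1) (x t) = (r t (x t) + 1) % d (x t)) ∧
  (∀ t v, v ≠ x t → r (t + 1) v = r t v) ∧
  (∀ t, x (t + 1) = succ (x t) (r (t + 1) (x t)))

/-- the number of visits of the walk `x` to `v` strictly before time `t` -/
noncomputable def nvisits {V : Type*} (x : ℕ → V) (t : ℕ) (v : V) : ℕ :=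
  ((Finset.range t).filter fun s => x s = v).card

/-- the rotor mechanism `(d, succ)` realizes the transition kernel `p`:
`p u v` is the proportion of the `d u` successors of `u` equal to `v` -/
def Realizes {V : Type*} (d : V → ℕ) (succ : V → ℕ → V) (p : V → V → ℝ) : Prop :=
  (∀ u, 0 < d u) ∧
  ∀ u v, p u v = ((Finset.range (d u)).filter fun i => succ u i = v).card / d u

/-- `hitAux p b c t v` is the probability, for the Markov chain with kernel `p`
started at `v`, of hitting `b` before hitting `c` and within `t` steps. -/
noncomputable def hitAux {V : Type*} (p : V → V → ℝ) (b c : V) : ℕ → V → ℝ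
  | 0, v => if v = b then 1 else 0
  | t + 1, v => if v = b then 1 else if v = c then 0 else ∑' w, p v w * hitAux p b c t w

/-- the hitting probability `h_{b,c}(v) = P_v(T_b < T_c)`, as the monotone limit of the
probabilities of hitting `b` before `c` within `t` steps.  (Taking `b = c` gives the
single-target hitting probability `P_v(T_b < ∞)`.) -/
noncomputable def hitProb {V : Type*} (p : V → V → ℝ) (b c : V) (v : V) : ℝ :=
  ⨆ t, hitAux p b c t v

/-- the escape probability `e_{u,v} = P_u(T_v < T_u^+)`: a first step from `u` to `w`,
then hit `v` before `u`. -/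
noncomputable def escProb {V : Type*} (p : V → V → ℝ) (u v : V) : ℝ :=
  ∑' w, p u w * hitProb p v u w

/-- the kernel of simple symmetric random walk on ℤ² -/
noncomputable def pZ2 : ℤ × ℤ → ℤ × ℤ → ℝ := fun u v =>
  if |u.1 - v.1| + |u.2 - v.2| = 1 then 1 / 4 else 0

/-- the anticlockwise rotor mechanism on ℤ²: in `0`-based indexing, rotor value `j`
points to `u^(j+1) = u + (cos ((j+1)π/2), sin ((j+1)π/2))`, i.e.
`j = 0` → North, `1` → West, `2` → South, `3` → East. -/
def succZ2 (u : ℤ × ℤ) (i : ℕ) : ℤ × ℤ :=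
  match i % 4 with
  | 0 => (u.1, u.2 + 1)
  | 1 => (u.1 - 1, u.2)
  | 2 => (u.1, u.2 - 1)
  | _ => (u.1 + 1, u.2)

/-- `arg` with values in `[0, 2π)` -/
noncomputable def arg2 (z : ℂ) : ℝ :=
  if Complex.arg z < 0 then Complex.arg z + 2 * Real.pi else Complex.arg z

/-- the spiral initial rotor configuration
`r((x,y)) = ⌊1/2 + (2/π) arg(x - 1/2, y - 1/2)⌋ mod 4`, translated to the `0`-based
indexing of `succZ2` (the paper's value `m ∈ {0,1,2,3}` denotes the rotor pointing to
`u^(m)` with `0 ≡ 4`, i.e. the `0`-based value `(m+3) % 4`). -/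
noncomputable def spiralRotor (v : ℤ × ℤ) : ℕ :=
  ((⌊(1 : ℝ) / 2 + (2 / Real.pi) * arg2 ⟨(v.1 : ℝ) - 1 / 2, (v.2 : ℝ) - 1 / 2⟩⌋).toNat
    + 3) % 4

/-- degrees for the walk modified so that `b` and `c` are sent straight back to `a` -/
def dMod (b c : ℤ × ℤ) : ℤ × ℤ → ℕ := fun u => if u = b ∨ u = c then 1 else 4

/-- successors for the modified walk: `b` and `c` send the particle straight to `a` -/
def succMod (a b c : ℤ × ℤ) : ℤ × ℤ → ℕ → ℤ × ℤ := fun u i =>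
  if u = b ∨ u = c then a else succZ2 u i

/-- the spiral initial configuration, modified at the degree-one vertices `b, c` -/
noncomputable def rotInit (b c : ℤ × ℤ) : ℤ × ℤ → ℕ := fun v =>
  if v = b ∨ v = c then 0 else spiralRotor v

/-! ### Part A: combinatorics of the rotor walk -/

lemma nvisits_zero {V : Type*} (x : ℕ → V) (v : V) : nvisits x 0 v = 0 := by
  simp [nvisits]

lemma nvisits_succ {V : Type*} (x : ℕ → V) (t : ℕ) (v : V) :
    nvisits x (t + 1) v = nvisits x t v + if x t = v then 1 else 0 := by
  unfold nvisits
  rw [Finset.range_add_one, Finset.filter_insert]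
  split_ifs with h
  · rw [Finset.card_insert_of_notMem (by simp)]
  · simp

/-- the ring index of a lattice point: rings are centered at `(1/2,1/2)` -/
def ringZ (v : ℤ × ℤ) : ℤ := max (max v.1 (1 - v.1)) (max v.2 (1 - v.2))

lemma succZ2_eq (v : ℤ × ℤ) (i : ℕ) : succZ2 v i =
    if i % 4 = 0 then (v.1, v.2 + 1) else if i % 4 = 1 then (v.1 - 1, v.2)
    else if i % 4 = 2 then (v.1, v.2 - 1) else (v.1 + 1, v.2) := by
  unfold succZ2
  have : i % 4 < 4 := Nat.mod_lt _ (by norm_num)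
  interval_cases h : i % 4 <;> simp

lemma succZ2_0 (v : ℤ × ℤ) : succZ2 v 0 = (v.1, v.2 + 1) := rfl
lemma succZ2_1 (v : ℤ × ℤ) : succZ2 v 1 = (v.1 - 1, v.2) := rfl
lemma succZ2_2 (v : ℤ × ℤ) : succZ2 v 2 = (v.1, v.2 - 1) := rfl
lemma succZ2_3 (v : ℤ × ℤ) : succZ2 v 3 = (v.1 + 1, v.2) := rfl
lemma succZ2_4 (v : ℤ × ℤ) : succZ2 v 4 = (v.1, v.2 + 1) := rfl
lemma succZ2_5 (v : ℤ × ℤ) : succZ2 v 5 = (v.1 - 1, v.2) := rfl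

lemma ring_succ_le (v : ℤ × ℤ) (i : ℕ) : ringZ (succZ2 v i) ≤ ringZ v + 1 := by
  rw [succZ2_eq]
  split_ifs <;> simp only [ringZ] <;> omega

section walk
variable {a b c : ℤ × ℤ} {x : ℕ → ℤ × ℤ} {r : ℕ → ℤ × ℤ → ℕ}

lemma rotor_formula (H : IsRotorWalk (dMod b c) (succMod a b c) x r) {v : ℤ × ℤ}
    (hv : ¬ (v = b ∨ v = c)) (t : ℕ) : r t v = (r 0 v + nvisits x t v) % 4 := by
  obtain ⟨h0, h1, h2, h3⟩ := H
  have hd : dMod b c v = 4 := by simp [dMod, hv]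
  have := h0 v
  rw [hd] at this
  induction t with
  | zero => rw [nvisits_zero]; omega
  | succ t ih =>
    rw [nvisits_succ]
    by_cases h : x t = v
    · have h1' := h1 t
      rw [h, hd] at h1'
      rw [if_pos h, h1', ih]; omega
    · rw [if_neg h, h2 t v (Ne.symm h), ih]; rfl

/-- number of exits from the (non-sink) vertex `w` in direction `i` before time `t` -/
noncomputable def exits (b c : ℤ × ℤ) (x : ℕ → ℤ × ℤ) (r : ℕ → ℤ × ℤ → ℕ)
    (t : ℕ) (w : ℤ × ℤ) (i : ℕ) : ℕ :=
  ∑ s ∈ Finset.range t, if x s = w ∧ ¬ (w = b ∨ w = c) ∧ r (s + 1) w = i then 1 else 0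

lemma exits_formula (H : IsRotorWalk (dMod b c) (succMod a b c) x r) {w : ℤ × ℤ}
    (hw : ¬ (w = b ∨ w = c)) {i : ℕ} (hi : i < 4) (t : ℕ) :
    exits b c x r t w i + (r 0 w + 4 - i) / 4 = (r 0 w + 4 - i + nvisits x t w) / 4 := by
  induction t with
  | zero => simp [exits, nvisits_zero]
  | succ t ih =>
    have hf := rotor_formula H hw (t + 1)
    have h2 : exits b c x r (t + 1) w i = exits b c x r t w i +
      if x t = w ∧ ¬ (w = b ∨ w = c) ∧ r (t + 1) w = i then 1 else 0 := by
      simp only [exits, Finset.sum_range_succ]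
    rw [h2]
    rw [nvisits_succ] at hf ⊢
    by_cases h : x t = w
    · rw [if_pos h] at hf ⊢
      by_cases hr : r (t + 1) w = i
      · rw [if_pos ⟨h, hw, hr⟩]; omega
      · rw [if_neg (fun hh => hr hh.2.2)]; omega
    · rw [if_neg h, if_neg (fun hh => h hh.1)]; exact ih

lemma exits_sink {w : ℤ × ℤ} (hw : w = b ∨ w = c) (t i : ℕ) : exits b c x r t w i = 0 := by
  simp [exits, hw]

lemma exits_le (w : ℤ × ℤ) (t i : ℕ) : exits b c x r t w i ≤ nvisits x t w := by
  induction t with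
  | zero => simp [exits]
  | succ t ih =>
    have h2 : exits b c x r (t + 1) w i = exits b c x r t w i +
      if x t = w ∧ ¬ (w = b ∨ w = c) ∧ r (t + 1) w = i then 1 else 0 := by
      simp only [exits, Finset.sum_range_succ]
    rw [h2, nvisits_succ]
    by_cases h : x t = w
    · rw [if_pos h]; split_ifs <;> omega
    · rw [if_neg h, if_neg (fun hh => h hh.1)]; omega

lemma walk_step (H : IsRotorWalk (dMod b c) (succMod a b c) x r) {t : ℕ}
    (h : ¬ (x t = b ∨ x t = c)) : x (t + 1) = succZ2 (x t) (r (t + 1) (x t)) := by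
  rw [H.2.2.2 t]; simp only [succMod, if_neg h]

lemma walk_step_sink (H : IsRotorWalk (dMod b c) (succMod a b c) x r) {t : ℕ}
    (h : x t = b ∨ x t = c) : x (t + 1) = a := by
  rw [H.2.2.2 t]; simp only [succMod, if_pos h]

lemma entries_eq (H : IsRotorWalk (dMod b c) (succMod a b c) x r) (hx : x 0 = a)
    {v : ℤ × ℤ} (hv : v ≠ a) (t : ℕ) :
    nvisits x (t + 1) v = ∑ i ∈ Finset.range 4, exits b c x r t (succZ2 v (i + 2)) i := by
  induction t with
  | zero =>
    rw [nvisits_succ, nvisits_zero, hx, if_neg (Ne.symm hv)]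
    simp [exits]
  | succ t ih =>
    have h2 : ∀ w i, exits b c x r (t + 1) w i = exits b c x r t w i +
      if x t = w ∧ ¬ (w = b ∨ w = c) ∧ r (t + 1) w = i then 1 else 0 := by
      intro w i
      simp only [exits, Finset.sum_range_succ]
    rw [nvisits_succ, ih]
    simp only [h2, Finset.sum_add_distrib]
    congr 1
    by_cases hs : x t = b ∨ x t = c
    · rw [walk_step_sink H hs, if_neg (Ne.symm hv)]
      symm
      apply Finset.sum_eq_zero
      intro i _
      rw [if_neg]
      rintro ⟨h1, h2, _⟩
      rw [h1] at hs
      exact h2 hs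
    · rw [walk_step H hs]
      have hj : r (t + 1) (x t) < 4 := by
        rw [rotor_formula H hs (t + 1)]; exact Nat.mod_lt _ (by norm_num)
      have key : ∀ i, (x t = succZ2 v (i + 2) ∧
          ¬ (succZ2 v (i + 2) = b ∨ succZ2 v (i + 2) = c) ∧ r (t + 1) (succZ2 v (i + 2)) = i) ↔
          (x t = succZ2 v (i + 2) ∧ r (t + 1) (x t) = i) := by
        intro i
        constructor
        · rintro ⟨h1, _, h3⟩
          exact ⟨h1, by rw [h1]; exact h3⟩
        · rintro ⟨h1, h3⟩
          rw [← h1]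
          exact ⟨rfl, hs, h3⟩
      simp only [key]
      generalize r (t + 1) (x t) = j at hj
      generalize x t = u
      obtain ⟨u1, u2⟩ := u
      obtain ⟨v1, v2⟩ := v
      simp only [Finset.sum_range_succ, Finset.sum_range_zero]
      interval_cases j <;> simp [succZ2_0, succZ2_1, succZ2_2, succZ2_3, succZ2_4, succZ2_5] <;>
        (congr 1; apply propext; omega)

lemma nvisits_mono {V : Type*} (x : ℕ → V) (v : V) {s t : ℕ} (h : s ≤ t) :
    nvisits x s v ≤ nvisits x t v := by
  induction t, h using Nat.le_induction with
  | base => exact le_rfl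
  | succ t _ ih => rw [nvisits_succ]; omega

lemma nvisits_eq_zero {V : Type*} (x : ℕ → V) (v : V) {t : ℕ} (h : ∀ s < t, x s ≠ v) :
    nvisits x t v = 0 := by
  unfold nvisits
  rw [Finset.card_eq_zero, Finset.filter_eq_empty_iff]
  intro s hs
  exact h s (Finset.mem_range.mp hs)

lemma rot0_lt (H : IsRotorWalk (dMod b c) (succMod a b c) x r) {w : ℤ × ℤ}
    (hw : ¬ (w = b ∨ w = c)) : r 0 w < 4 := by
  have := H.1 w
  simpa [dMod, hw] using this

lemma exits_diff (H : IsRotorWalk (dMod b c) (succMod a b c) x r) {t0 t : ℕ} (w : ℤ × ℤ)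
    {i : ℕ} (hi : i < 4) (h : nvisits x t w ≤ nvisits x t0 w + 4) :
    exits b c x r t w i ≤ exits b c x r t0 w i + 1 := by
  by_cases hw : w = b ∨ w = c
  · rw [exits_sink hw]; omega
  · have h1 := exits_formula H hw hi t
    have h2 := exits_formula H hw hi t0
    omega

lemma excursion (H : IsRotorWalk (dMod b c) (succMod a b c) x r) (hx : x 0 = a)
    {t0 t : ℕ} (h : t0 ≤ t) (ht0 : x t0 = a) (hno : ∀ s, t0 < s → s < t → x s ≠ a) :
    ∀ v, nvisits x t v ≤ nvisits x t0 v + 4 := by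
  induction t, h using Nat.le_induction with
  | base => intro v; omega
  | succ t htt ih =>
    have ih' := ih (fun s h1 h2 => hno s h1 (by omega))
    intro v
    rcases eq_or_lt_of_le htt with rfl | hlt
    · rw [nvisits_succ]; split_ifs <;> omega
    · by_cases hv : x t = v
      · have hva : v ≠ a := by rw [← hv]; exact hno t hlt (by omega)
        have e1 := entries_eq H hx hva t
        have e2 := entries_eq H hx hva t0
        have e3 : nvisits x (t0 + 1) v = nvisits x t0 v := by
          rw [nvisits_succ, if_neg (by rw [ht0]; exact Ne.symm hva)]; rfl
        have e4 : ∑ i ∈ Finset.range 4, exits b c x r t (succZ2 v (i + 2)) i ≤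
            ∑ i ∈ Finset.range 4, (exits b c x r t0 (succZ2 v (i + 2)) i + 1) := by
          apply Finset.sum_le_sum
          intro i hi
          exact exits_diff H _ (Finset.mem_range.mp hi) (ih' _)
        rw [Finset.sum_add_distrib] at e4
        simp at e4
        omega
      · rw [nvisits_succ, if_neg hv]; exact ih' v

end walk

lemma arg2_spec (z : ℂ) : 0 ≤ arg2 z ∧ arg2 z < 2 * Real.pi ∧
    z.re = ‖z‖ * Real.cos (arg2 z) ∧ z.im = ‖z‖ * Real.sin (arg2 z) := by
  have h1 := Complex.neg_pi_lt_arg z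
  have h2 := Complex.arg_le_pi z
  have hp := Real.pi_pos
  have h3 := Complex.norm_mul_cos_arg z
  have h4 := Complex.norm_mul_sin_arg z
  unfold arg2
  split_ifs with h
  · refine ⟨by linarith, by linarith, ?_, ?_⟩
    · rw [Real.cos_add_two_pi, h3]
    · rw [Real.sin_add_two_pi, h4]
  · push Not at h
    exact ⟨h, by linarith, h3.symm, h4.symm⟩

lemma spiral_cases (v : ℤ × ℤ) :
    (spiralRotor v = 3 ∧ v.2 < v.1 ∧ 1 ≤ v.1 + v.2) ∨
    (spiralRotor v = 0 ∧ v.1 ≤ v.2 ∧ 1 < v.1 + v.2) ∨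
    (spiralRotor v = 1 ∧ v.1 < v.2 ∧ v.1 + v.2 ≤ 1) ∨
    (spiralRotor v = 2 ∧ v.2 ≤ v.1 ∧ v.1 + v.2 < 1) := by
  have hp := Real.pi_pos
  set z : ℂ := ⟨(v.1 : ℝ) - 1 / 2, (v.2 : ℝ) - 1 / 2⟩ with hz
  obtain ⟨g0, g1, g2, g3⟩ := arg2_spec z
  have hz0 : z ≠ 0 := by
    intro h
    have := congrArg Complex.re h
    simp [hz] at this
    have h2 : (2 : ℝ) * v.1 = 1 := by linarith
    have h3 : (2 : ℤ) * v.1 = 1 := by exact_mod_cast h2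
    omega
  have hn : 0 < ‖z‖ := norm_pos_iff.mpr hz0
  set φ := arg2 z with hφ
  have hs : spiralRotor v = ((⌊(1 : ℝ) / 2 + (2 / Real.pi) * φ⌋).toNat + 3) % 4 := rfl
  -- the sums and differences of the coordinates
  have hsub : ((v.2 : ℝ) - v.1) = ‖z‖ * Real.sqrt 2 * Real.sin (φ - Real.pi / 4) := by
    rw [Real.sin_sub, Real.cos_pi_div_four, Real.sin_pi_div_four]
    have : Real.sqrt 2 * Real.sqrt 2 = 2 := Real.mul_self_sqrt (by norm_num)
    have e : (v.2 : ℝ) - v.1 = z.im - z.re := by simp [hz]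
    rw [e, g2, g3]
    linear_combination (-(‖z‖ * Real.sin φ - ‖z‖ * Real.cos φ) / 2) * this
  have hadd : ((v.1 : ℝ) + v.2 - 1) = ‖z‖ * Real.sqrt 2 * Real.sin (φ + Real.pi / 4) := by
    rw [Real.sin_add, Real.cos_pi_div_four, Real.sin_pi_div_four]
    have : Real.sqrt 2 * Real.sqrt 2 = 2 := Real.mul_self_sqrt (by norm_num)
    have e : (v.1 : ℝ) + v.2 - 1 = z.im + z.re := by simp [hz]; ring
    rw [e, g2, g3]
    linear_combination (-(‖z‖ * Real.sin φ + ‖z‖ * Real.cos φ) / 2) * this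
  have hc : 0 < ‖z‖ * Real.sqrt 2 := by positivity
  have hfl : ∀ m : ℤ, ((m : ℝ) - 1 / 2) * (Real.pi / 2) ≤ φ →
      φ < ((m : ℝ) + 1 / 2) * (Real.pi / 2) → ⌊(1 : ℝ) / 2 + (2 / Real.pi) * φ⌋ = m := by
    intro m h1 h2
    rw [Int.floor_eq_iff]
    have e : φ = ((2 / Real.pi) * φ) * (Real.pi / 2) := by field_simp
    rw [e] at h1 h2
    have k1 := le_of_mul_le_mul_right h1 (by positivity)
    have k2 := lt_of_mul_lt_mul_right h2 (by positivity)
    constructor <;> linarith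
  have sub_pos' : 0 < Real.sin (φ - Real.pi / 4) → v.1 < v.2 := by
    intro h
    have : 0 < (v.2 : ℝ) - v.1 := by rw [hsub]; exact mul_pos hc h
    have : (v.1 : ℝ) < v.2 := by linarith
    exact_mod_cast this
  have sub_nn : 0 ≤ Real.sin (φ - Real.pi / 4) → v.1 ≤ v.2 := by
    intro h
    have : 0 ≤ (v.2 : ℝ) - v.1 := by rw [hsub]; exact mul_nonneg hc.le h
    have : (v.1 : ℝ) ≤ v.2 := by linarith
    exact_mod_cast this
  have sub_neg' : Real.sin (φ - Real.pi / 4) < 0 → v.2 < v.1 := by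
    intro h
    have : (v.2 : ℝ) - v.1 < 0 := by rw [hsub]; exact mul_neg_of_pos_of_neg hc h
    have : (v.2 : ℝ) < v.1 := by linarith
    exact_mod_cast this
  have sub_np : Real.sin (φ - Real.pi / 4) ≤ 0 → v.2 ≤ v.1 := by
    intro h
    have : (v.2 : ℝ) - v.1 ≤ 0 := by rw [hsub]; exact mul_nonpos_of_nonneg_of_nonpos hc.le h
    have : (v.2 : ℝ) ≤ v.1 := by linarith
    exact_mod_cast this
  have add_pos' : 0 < Real.sin (φ + Real.pi / 4) → 1 < v.1 + v.2 := by
    intro h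
    have : 0 < (v.1 : ℝ) + v.2 - 1 := by rw [hadd]; exact mul_pos hc h
    have : (1 : ℝ) < v.1 + v.2 := by linarith
    exact_mod_cast this
  have add_nn : 0 ≤ Real.sin (φ + Real.pi / 4) → 1 ≤ v.1 + v.2 := by
    intro h
    have : 0 ≤ (v.1 : ℝ) + v.2 - 1 := by rw [hadd]; exact mul_nonneg hc.le h
    have : (1 : ℝ) ≤ v.1 + v.2 := by linarith
    exact_mod_cast this
  have add_neg' : Real.sin (φ + Real.pi / 4) < 0 → v.1 + v.2 < 1 := by
    intro h
    have : (v.1 : ℝ) + v.2 - 1 < 0 := by rw [hadd]; exact mul_neg_of_pos_of_neg hc h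
    have : (v.1 : ℝ) + v.2 < 1 := by linarith
    exact_mod_cast this
  have add_np : Real.sin (φ + Real.pi / 4) ≤ 0 → v.1 + v.2 ≤ 1 := by
    intro h
    have : (v.1 : ℝ) + v.2 - 1 ≤ 0 := by rw [hadd]; exact mul_nonpos_of_nonneg_of_nonpos hc.le h
    have : (v.1 : ℝ) + v.2 ≤ 1 := by linarith
    exact_mod_cast this
  -- sign of sine
  have S : ∀ ψ, Real.sin ψ = - Real.sin (ψ - Real.pi) := by
    intro ψ; rw [Real.sin_sub_pi]; ring
  have S2 : ∀ ψ, Real.sin ψ = Real.sin (ψ - 2 * Real.pi) := by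
    intro ψ; rw [Real.sin_sub_two_pi]
  rcases lt_or_ge φ (Real.pi / 4) with k1 | k1
  · left
    have := hfl 0 (by push_cast; linarith) (by push_cast; linarith)
    refine ⟨by rw [hs, this]; rfl, sub_neg' ?_, add_nn ?_⟩
    · exact Real.sin_neg_of_neg_of_neg_pi_lt (by linarith) (by linarith)
    · exact Real.sin_nonneg_of_nonneg_of_le_pi (by linarith) (by linarith)
  rcases lt_or_ge φ (3 * Real.pi / 4) with k2 | k2
  · right; left
    have := hfl 1 (by push_cast; linarith) (by push_cast; linarith)
    refine ⟨by rw [hs, this]; rfl, sub_nn ?_, add_pos' ?_⟩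
    · exact Real.sin_nonneg_of_nonneg_of_le_pi (by linarith) (by linarith)
    · exact Real.sin_pos_of_pos_of_lt_pi (by linarith) (by linarith)
  rcases lt_or_ge φ (5 * Real.pi / 4) with k3 | k3
  · right; right; left
    have := hfl 2 (by push_cast; linarith) (by push_cast; linarith)
    refine ⟨by rw [hs, this]; rfl, sub_pos' ?_, add_np ?_⟩
    · exact Real.sin_pos_of_pos_of_lt_pi (by linarith) (by linarith)
    · rw [S]
      have := Real.sin_nonneg_of_nonneg_of_le_pi (x := φ + Real.pi / 4 - Real.pi)
        (by linarith) (by linarith)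
      linarith
  rcases lt_or_ge φ (7 * Real.pi / 4) with k4 | k4
  · right; right; right
    have := hfl 3 (by push_cast; linarith) (by push_cast; linarith)
    refine ⟨by rw [hs, this]; rfl, sub_np ?_, add_neg' ?_⟩
    · rw [S]
      have := Real.sin_nonneg_of_nonneg_of_le_pi (x := φ - Real.pi / 4 - Real.pi)
        (by linarith) (by linarith)
      linarith
    · rw [S]
      have := Real.sin_pos_of_pos_of_lt_pi (x := φ + Real.pi / 4 - Real.pi)
        (by linarith) (by linarith)
      linarith
  · left
    have := hfl 4 (by push_cast; linarith) (by push_cast; linarith)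
    refine ⟨by rw [hs, this]; rfl, sub_neg' ?_, add_nn ?_⟩
    · rw [S]
      have := Real.sin_pos_of_pos_of_lt_pi (x := φ - Real.pi / 4 - Real.pi)
        (by linarith) (by linarith)
      linarith
    · rw [S2]
      exact Real.sin_nonneg_of_nonneg_of_le_pi (by linarith) (by linarith)

lemma spiral_out (v : ℤ × ℤ) (k : ℕ) (hk : 1 ≤ k)
    (hk2 : k ≤ ∑ i ∈ Finset.range 4, if ringZ (succZ2 v (i + 2)) ≤ ringZ v then 1 else 0) :
    ringZ (succZ2 v ((spiralRotor v + k) % 4)) ≤ ringZ v := by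
  have hs := spiral_cases v
  have hk4 : k ≤ 4 := by
    refine hk2.trans ?_
    calc _ ≤ ∑ i ∈ Finset.range 4, 1 := by
          apply Finset.sum_le_sum; intro i _; split_ifs <;> omega
      _ = 4 := by simp
  simp only [Finset.sum_range_succ, Finset.sum_range_zero] at hk2
  have ind : ∀ w : ℤ × ℤ, ∃ n : ℕ, (if ringZ w ≤ ringZ v then 1 else 0) = n ∧
      ((ringZ w ≤ ringZ v ∧ n = 1) ∨ (ringZ v < ringZ w ∧ n = 0)) := by
    intro w
    by_cases h : ringZ w ≤ ringZ v
    · exact ⟨1, if_pos h, Or.inl ⟨h, rfl⟩⟩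
    · exact ⟨0, if_neg h, Or.inr ⟨by omega, rfl⟩⟩
  obtain ⟨n1, e1, d1⟩ := ind (succZ2 v (0 + 2))
  obtain ⟨n2, e2, d2⟩ := ind (succZ2 v (1 + 2))
  obtain ⟨n3, e3, d3⟩ := ind (succZ2 v (2 + 2))
  obtain ⟨n4, e4, d4⟩ := ind (succZ2 v (3 + 2))
  rw [e1, e2, e3, e4] at hk2
  clear e1 e2 e3 e4 ind
  simp only [Nat.reduceAdd, succZ2_2, succZ2_3, succZ2_4, succZ2_5] at d1 d2 d3 d4
  obtain ⟨v1, v2⟩ := v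
  rcases hs with ⟨h, h1, h2⟩ | ⟨h, h1, h2⟩ | ⟨h, h1, h2⟩ | ⟨h, h1, h2⟩ <;> rw [h] <;>
    clear h <;>
    interval_cases k <;> simp only [Nat.reduceAdd, Nat.reduceMod, succZ2_0, succZ2_1, succZ2_2,
      succZ2_3, ringZ] at * <;> omega

section walk
variable {a b c : ℤ × ℤ} {x : ℕ → ℤ × ℤ} {r : ℕ → ℤ × ℤ → ℕ}

lemma ring_exc (H : IsRotorWalk (dMod b c) (succMod a b c) x r)
    (hr : ∀ v, r 0 v = rotInit b c v) (hx : x 0 = a) {K : ℤ}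
    (ha : ringZ a ≤ K) (hb : ringZ b ≤ K) (hc : ringZ c ≤ K)
    {t0 t : ℕ} (h : t0 ≤ t) (ht0 : x t0 = a) (hno : ∀ s, t0 < s → s < t → x s ≠ a)
    (hK : ∀ s ≤ t0, ringZ (x s) ≤ K) :
    ∀ s ≤ t, ringZ (x s) ≤ K + 1 := by
  induction t, h using Nat.le_induction with
  | base => intro s hs; have := hK s hs; omega
  | succ t htt ih =>
    have hno' : ∀ s, t0 < s → s < t → x s ≠ a := fun s h1 h2 => hno s h1 (by omega)
    have ih' := ih hno'
    intro s hs
    rcases Nat.lt_or_ge s (t + 1) with h1 | h1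
    · exact ih' s (by omega)
    have hst : s = t + 1 := by omega
    subst hst
    by_cases hsink : x t = b ∨ x t = c
    · rw [walk_step_sink H hsink]; omega
    rw [walk_step H hsink]
    by_cases hle : ringZ (x t) ≤ K
    · have := ring_succ_le (x t) (r (t + 1) (x t)); omega
    have hKt := ih' t le_rfl
    set v := x t with hv
    have hKv : ringZ v = K + 1 := by omega
    have hva : v ≠ a := by rintro h; rw [h] at hle; exact hle ha
    have e1 := entries_eq H hx hva t
    have e2 := entries_eq H hx hva t0
    have z : nvisits x (t0 + 1) v = 0 := by
      apply nvisits_eq_zero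
      intro s hs h
      have := hK s (by omega)
      rw [h] at this
      omega
    rw [z] at e2
    have e3 : ∀ i ∈ Finset.range 4, exits b c x r t0 (succZ2 v (i + 2)) i = 0 := by
      exact Finset.sum_eq_zero_iff.mp e2.symm
    have e4 : ∑ i ∈ Finset.range 4, exits b c x r t (succZ2 v (i + 2)) i ≤
        ∑ i ∈ Finset.range 4, if ringZ (succZ2 v (i + 2)) ≤ ringZ v then 1 else 0 := by
      apply Finset.sum_le_sum
      intro i hi
      split_ifs with h
      · have := exits_diff H (succZ2 v (i + 2)) (Finset.mem_range.mp hi)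
          (excursion H hx htt ht0 hno' (succZ2 v (i + 2)))
        have := e3 i hi
        omega
      · have h1 := exits_le (b := b) (c := c) (x := x) (r := r) (succZ2 v (i + 2)) t i
        rw [nvisits_eq_zero x (succZ2 v (i + 2))] at h1
        · exact h1
        · intro s hs h2
          have := ih' s hs.le
          rw [h2] at this
          omega
    rw [← e1] at e4
    rw [rotor_formula H hsink (t + 1), hr v]
    have : rotInit b c v = spiralRotor v := by simp only [rotInit, if_neg hsink]
    rw [this]
    have := spiral_out v (nvisits x (t + 1) v) (by rw [nvisits_succ, if_pos hv.symm]; omega) e4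
    omega

lemma exists_last (x : ℕ → ℤ × ℤ) (a : ℤ × ℤ) (hx : x 0 = a) (t : ℕ) (ht : 0 < t) :
    ∃ t0 < t, x t0 = a ∧ (∀ s, t0 < s → s < t → x s ≠ a) ∧
      nvisits x t a = nvisits x t0 a + 1 := by
  induction t with
  | zero => omega
  | succ t ih =>
    by_cases h : x t = a
    · exact ⟨t, by omega, h, fun s h1 h2 => by omega, by rw [nvisits_succ, if_pos h]⟩
    · have : 0 < t := by
        rcases Nat.eq_zero_or_pos t with h0 | h0
        · subst h0; exact absurd hx h
        · exact h0
      obtain ⟨t0, h1, h2, h3, h4⟩ := ih this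
      refine ⟨t0, by omega, h2, ?_, by rw [nvisits_succ, if_neg h, h4]⟩
      intro s hs1 hs2
      rcases Nat.lt_or_ge s t with h5 | h5
      · exact h3 s hs1 h5
      · have : s = t := by omega
        subst this; exact h

lemma range_bound (H : IsRotorWalk (dMod b c) (succMod a b c) x r)
    (hr : ∀ v, r 0 v = rotInit b c v) (hx : x 0 = a) {K : ℤ}
    (ha : ringZ a ≤ K) (hb : ringZ b ≤ K) (hc : ringZ c ≤ K) (t : ℕ) :
    (∀ s ≤ t, ringZ (x s) ≤ K + nvisits x t a) ∧ ∀ v, nvisits x t v ≤ 4 * nvisits x t a := by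
  induction t using Nat.strong_induction_on with
  | _ t ih =>
    rcases Nat.eq_zero_or_pos t with h0 | h0
    · subst h0
      refine ⟨?_, fun v => by simp [nvisits_zero]⟩
      intro s hs
      have : s = 0 := by omega
      subst this
      rw [hx, nvisits_zero]
      simpa using ha
    · obtain ⟨t0, h1, h2, h3, h4⟩ := exists_last x a hx t h0
      obtain ⟨i1, i2⟩ := ih t0 h1
      constructor
      · have := ring_exc H hr hx (K := K + nvisits x t0 a) (by omega) (by omega) (by omega)
          h1.le h2 h3 i1
        intro s hs
        have := this s hs
        rw [h4]; push_cast; omega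
      · intro v
        have e1 := excursion H hx h1.le h2 h3 v
        have e2 := i2 v
        rw [h4]; omega

lemma exits_le_succ (H : IsRotorWalk (dMod b c) (succMod a b c) x r) {v : ℤ × ℤ} {i : ℕ}
    (t : ℕ) : exits b c x r t v i ≤ nvisits x (t + 1) (succZ2 v i) := by
  induction t with
  | zero => simp [exits]
  | succ t ih =>
    have h2 : exits b c x r (t + 1) v i = exits b c x r t v i +
      if x t = v ∧ ¬ (v = b ∨ v = c) ∧ r (t + 1) v = i then 1 else 0 := by
      simp only [exits, Finset.sum_range_succ]
    rw [h2, nvisits_succ]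
    split_ifs with h3 h4 h4
    · omega
    · exfalso
      obtain ⟨k1, k2, k3⟩ := h3
      apply h4
      rw [walk_step H (by rw [k1]; exact k2), k1, k3]
    · omega
    · omega

lemma visits_local (a b c : ℤ × ℤ) (d : ℕ) : ∀ v : ℤ × ℤ,
    (v.1 - b.1).natAbs + (v.2 - b.2).natAbs = d →
    ∃ C : ℕ, ∀ (x : ℕ → ℤ × ℤ) (r : ℕ → ℤ × ℤ → ℕ),
      IsRotorWalk (dMod b c) (succMod a b c) x r → ∀ t,
      nvisits x t v ≤ C * (nvisits x t b + nvisits x t c + 1) := by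
  induction d with
  | zero =>
    intro v hv
    have : v = b := by ext <;> omega
    subst this
    exact ⟨1, fun x r _ t => by omega⟩
  | succ d ih =>
    intro v hv
    by_cases hs : v = b ∨ v = c
    · refine ⟨1, fun x r _ t => ?_⟩
      rcases hs with h | h <;> subst h <;> omega
    have : ∃ i < 4, ((succZ2 v i).1 - b.1).natAbs + ((succZ2 v i).2 - b.2).natAbs = d := by
      rcases lt_trichotomy v.1 b.1 with h | h | h
      · exact ⟨3, by omega, by rw [succZ2_3]; dsimp only; omega⟩
      · rcases lt_trichotomy v.2 b.2 with h' | h' | h'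
        · exact ⟨0, by omega, by rw [succZ2_0]; dsimp only; omega⟩
        · omega
        · exact ⟨2, by omega, by rw [succZ2_2]; dsimp only; omega⟩
      · exact ⟨1, by omega, by rw [succZ2_1]; dsimp only; omega⟩
    obtain ⟨i, hi, hd⟩ := this
    obtain ⟨C, hC⟩ := ih _ hd
    refine ⟨4 * C + 8, fun x r H t => ?_⟩
    have h1 := hC x r H t
    have h2 := exits_le_succ H (v := v) (i := i) t
    have h3 := exits_formula H hs hi t
    have h4 : nvisits x (t + 1) (succZ2 v i) ≤ nvisits x t (succZ2 v i) + 1 := by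
      rw [nvisits_succ]; split_ifs <;> omega
    have h5 : nvisits x t v ≤ 4 * nvisits x t (succZ2 v i) + 8 := by omega
    nlinarith

end walk

/-- the box of all points of ring index at most `R` -/
noncomputable def boxZ (R : ℕ) : Finset (ℤ × ℤ) :=
  (Finset.Icc (1 - (R : ℤ)) R) ×ˢ (Finset.Icc (1 - (R : ℤ)) R)

lemma mem_boxZ {R : ℕ} {v : ℤ × ℤ} : v ∈ boxZ R ↔ ringZ v ≤ R := by
  simp only [boxZ, Finset.mem_product, Finset.mem_Icc, ringZ]
  omega

lemma card_boxZ (R : ℕ) : (boxZ R).card = (2 * R) ^ 2 := by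
  simp only [boxZ, Finset.card_product, Int.card_Icc]
  have : ((R : ℤ) + 1 - (1 - (R : ℤ))).toNat = 2 * R := by omega
  rw [this]; ring

lemma ringZ_pos (v : ℤ × ℤ) : 1 ≤ ringZ v := by
  simp only [ringZ]; omega

lemma box_sum (R : ℕ) : ∑ v ∈ boxZ R, 1 / ((ringZ v : ℤ) : ℝ) ^ 2 ≤ 8 * (harmonic R : ℝ) := by
  induction R with
  | zero =>
    have : boxZ 0 = ∅ := by
      rw [← Finset.card_eq_zero, card_boxZ]; rfl
    rw [this]; simp
  | succ R ih =>
    have hsub : boxZ R ⊆ boxZ (R + 1) := by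
      intro v hv
      rw [mem_boxZ] at *
      push_cast; omega
    rw [← Finset.sum_sdiff hsub]
    have h1 : ∑ v ∈ boxZ (R + 1) \ boxZ R, 1 / ((ringZ v : ℤ) : ℝ) ^ 2 =
        (boxZ (R + 1) \ boxZ R).card • (1 / ((R : ℝ) + 1) ^ 2) := by
      apply Finset.sum_eq_card_nsmul
      intro v hv
      rw [Finset.mem_sdiff, mem_boxZ, mem_boxZ] at hv
      have : ringZ v = (R : ℤ) + 1 := by push_cast at hv; omega
      rw [this]; push_cast; rfl
    have h2 : (boxZ (R + 1) \ boxZ R).card = 8 * R + 4 := by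
      rw [Finset.card_sdiff_of_subset hsub, card_boxZ, card_boxZ]
      have : (2 * (R + 1)) ^ 2 = (2 * R) ^ 2 + (8 * R + 4) := by ring
      omega
    rw [h1, h2, harmonic_succ]
    push_cast
    have h3 : (8 * R + 4 : ℕ) • (1 / ((R : ℝ) + 1) ^ 2) ≤ 8 * ((R : ℝ) + 1)⁻¹ := by
      rw [nsmul_eq_mul, mul_one_div, div_le_iff₀ (by positivity)]
      push_cast
      have : 8 * ((R : ℝ) + 1)⁻¹ * ((R : ℝ) + 1) ^ 2 = 8 * ((R : ℝ) + 1) := by field_simp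
      rw [this]; linarith
    linarith

section walk
variable {a b c : ℤ × ℤ} {x : ℕ → ℤ × ℤ} {r : ℕ → ℤ × ℤ → ℕ}

lemma disc_identity (H : IsRotorWalk (dMod b c) (succMod a b c) x r) (hx : x 0 = a)
    (hbc : b ≠ c) (h : ℤ × ℤ → ℝ) (hb : h b = 1) (hc : h c = 0) (B : Finset (ℤ × ℤ)) (t : ℕ)
    (hB : ∀ s < t, x s ∈ B) :
    h (x t) - h a = nvisits x t b * (h a - 1) + nvisits x t c * h a +
      ∑ v ∈ B, ∑ i ∈ Finset.range 4, (exits b c x r t v i : ℝ) * (h (succZ2 v i) - h v) := by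
  induction t with
  | zero => simp [hx, nvisits_zero, exits]
  | succ t ih =>
    have ih' := ih (fun s hs => hB s (by omega))
    have h2 : ∀ w i, exits b c x r (t + 1) w i = exits b c x r t w i +
      if x t = w ∧ ¬ (w = b ∨ w = c) ∧ r (t + 1) w = i then 1 else 0 := by
      intro w i
      simp only [exits, Finset.sum_range_succ]
    have h3 : ∑ v ∈ B, ∑ i ∈ Finset.range 4,
        (exits b c x r (t + 1) v i : ℝ) * (h (succZ2 v i) - h v) =
        ∑ v ∈ B, ∑ i ∈ Finset.range 4, (exits b c x r t v i : ℝ) * (h (succZ2 v i) - h v) +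
        ∑ v ∈ B, ∑ i ∈ Finset.range 4,
          (if x t = v ∧ ¬ (v = b ∨ v = c) ∧ r (t + 1) v = i then (h (succZ2 v i) - h v) else 0) := by
      rw [← Finset.sum_add_distrib]
      apply Finset.sum_congr rfl
      intro v _
      rw [← Finset.sum_add_distrib]
      apply Finset.sum_congr rfl
      intro i _
      rw [h2]
      split_ifs <;> push_cast <;> ring
    have h4 : ∑ v ∈ B, ∑ i ∈ Finset.range 4,
          (if x t = v ∧ ¬ (v = b ∨ v = c) ∧ r (t + 1) v = i then (h (succZ2 v i) - h v) else 0) =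
          if x t = b ∨ x t = c then 0 else h (x (t + 1)) - h (x t) := by
      rw [Finset.sum_eq_single (x t)]
      · by_cases hs : x t = b ∨ x t = c
        · rw [if_pos hs]
          apply Finset.sum_eq_zero
          intro i _
          rw [if_neg]
          exact fun hh => hh.2.1 hs
        · rw [if_neg hs, Finset.sum_eq_single (r (t + 1) (x t))]
          · rw [if_pos ⟨rfl, hs, rfl⟩, walk_step H hs]
          · intro i _ hi
            rw [if_neg]
            exact fun hh => hi hh.2.2.symm
          · intro hh
            exfalso; apply hh
            rw [Finset.mem_range, rotor_formula H hs (t + 1)]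
            exact Nat.mod_lt _ (by norm_num)
      · intro v _ hv
        apply Finset.sum_eq_zero
        intro i _
        rw [if_neg]
        exact fun hh => hv hh.1.symm
      · intro hh
        exact absurd (hB t (by omega)) hh
    rw [h3, h4, nvisits_succ, nvisits_succ]
    by_cases hs : x t = b ∨ x t = c
    · rw [if_pos hs, walk_step_sink H hs]
      rcases hs with hs | hs
      · rw [if_pos hs, if_neg (by rw [hs]; exact hbc)]
        rw [hs, hb] at ih'
        push_cast
        linarith
      · rw [if_pos hs, if_neg (by rw [hs]; exact hbc.symm)]
        rw [hs, hc] at ih'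
        push_cast
        linarith
    · rw [if_neg hs, if_neg (fun hh => hs (Or.inl hh)), if_neg (fun hh => hs (Or.inr hh))]
      push_cast
      linarith

lemma disc_local (H : IsRotorWalk (dMod b c) (succMod a b c) x r)
    (h : ℤ × ℤ → ℝ) (hh : ∀ v, ¬ (v = b ∨ v = c) →
      ∑ i ∈ Finset.range 4, (h (succZ2 v i) - h v) = 0) (t : ℕ) (v : ℤ × ℤ) :
    |∑ i ∈ Finset.range 4, (exits b c x r t v i : ℝ) * (h (succZ2 v i) - h v)| ≤
      ∑ i ∈ Finset.range 4, |h (succZ2 v i) - h v| := by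
  by_cases hs : v = b ∨ v = c
  · simp only [exits_sink hs]
    simp only [Nat.cast_zero, zero_mul, Finset.sum_const_zero, abs_zero]
    exact Finset.sum_nonneg (fun _ _ => abs_nonneg _)
  · have h1 : ∑ i ∈ Finset.range 4, (exits b c x r t v i : ℝ) * (h (succZ2 v i) - h v) =
        ∑ i ∈ Finset.range 4, ((exits b c x r t v i : ℝ) - (nvisits x t v / 4 : ℕ)) *
          (h (succZ2 v i) - h v) := by
      have e : ∑ i ∈ Finset.range 4, ((nvisits x t v / 4 : ℕ) : ℝ) * (h (succZ2 v i) - h v) = 0 := by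
        rw [← Finset.mul_sum, hh v hs, mul_zero]
      rw [← sub_zero (∑ i ∈ Finset.range 4, (exits b c x r t v i : ℝ) * (h (succZ2 v i) - h v)),
        ← e, ← Finset.sum_sub_distrib]
      apply Finset.sum_congr rfl
      intro i _
      ring
    rw [h1]
    refine (Finset.abs_sum_le_sum_abs _ _).trans (Finset.sum_le_sum ?_)
    intro i hi
    rw [abs_mul]
    have e := exits_formula H hs (Finset.mem_range.mp hi) t
    have e2 : exits b c x r t v i = nvisits x t v / 4 ∨
      exits b c x r t v i = nvisits x t v / 4 + 1 := by omega
    have : |(exits b c x r t v i : ℝ) - (nvisits x t v / 4 : ℕ)| ≤ 1 := by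
      rcases e2 with e2 | e2 <;> rw [e2] <;> simp
    nlinarith [abs_nonneg (h (succZ2 v i) - h v)]

lemma time_eq (x : ℕ → ℤ × ℤ) (B : Finset (ℤ × ℤ)) (t : ℕ) (hB : ∀ s < t, x s ∈ B) :
    t = ∑ v ∈ B, nvisits x t v := by
  unfold nvisits
  have := Finset.card_eq_sum_card_fiberwise (f := x) (s := Finset.range t) (t := B)
    (fun s hs => hB s (by simpa using hs))
  rw [Finset.card_range] at this
  convert this

end walk

theorem main_assembly (a b c : ℤ × ℤ) (hbc : b ≠ c) (h : ℤ × ℤ → ℝ)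
    (h01 : ∀ v, 0 ≤ h v ∧ h v ≤ 1) (hb : h b = 1) (hc : h c = 0)
    (hh : ∀ v, ¬ (v = b ∨ v = c) → ∑ i ∈ Finset.range 4, (h (succZ2 v i) - h v) = 0)
    (hg : ∃ C : ℝ, 0 ≤ C ∧ ∀ v, ∑ i ∈ Finset.range 4, |h (succZ2 v i) - h v| ≤
      C * (1 / ((ringZ v : ℤ) : ℝ) ^ 2)) :
    ∃ C C' : ℝ, ∀ (x : ℕ → ℤ × ℤ) (r : ℕ → ℤ × ℤ → ℕ),
      IsRotorWalk (dMod b c) (succMod a b c) x r →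
      (∀ v, r 0 v = rotInit b c v) →
      x 0 = a →
      ∀ t : ℕ, 2 ≤ nvisits x t b + nvisits x t c →
        (|h a -
            (nvisits x t b : ℝ) / ((nvisits x t b : ℝ) + nvisits x t c)| ≤
          C * Real.log ((nvisits x t b : ℝ) + nvisits x t c) /
            ((nvisits x t b : ℝ) + nvisits x t c)) ∧
        (t : ℝ) ≤ C' * ((nvisits x t b : ℝ) + nvisits x t c) ^ 3 := by
  obtain ⟨G, hG0, hG⟩ := hg
  obtain ⟨C0, hC0⟩ := visits_local a b c _ a rfl
  obtain ⟨K0, ka, kb, kc, hK0⟩ : ∃ K0 : ℕ, ringZ a ≤ K0 ∧ ringZ b ≤ K0 ∧ ringZ c ≤ K0 ∧ 1 ≤ K0 := by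
    refine ⟨(max (ringZ a) (max (ringZ b) (ringZ c))).toNat, ?_⟩
    have := ringZ_pos a
    omega
  set C1 : ℕ := K0 + 2 * C0 with hC1
  refine ⟨(1 + 8 * G * (1 + Real.log C1)) / Real.log 2 + 8 * G, 32 * C1 ^ 2 * C0, ?_⟩
  intro x r H hr hx t hn
  set n : ℕ := nvisits x t b + nvisits x t c with hnn
  have hcast : (nvisits x t b : ℝ) + nvisits x t c = n := by rw [hnn]; push_cast; rfl
  rw [hcast]
  obtain ⟨g1, g2⟩ := range_bound H hr hx ka kb kc t
  set N := nvisits x t a with hN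
  have hN1 : N ≤ 2 * C0 * n := by
    have := hC0 x r H t
    have h3 : C0 * (nvisits x t b + nvisits x t c + 1) ≤ C0 * (2 * n) := by
      apply Nat.mul_le_mul_left; omega
    calc N ≤ C0 * (2 * n) := this.trans h3
      _ = 2 * C0 * n := by ring
  set R := K0 + N with hR
  have hR1 : R ≤ C1 * n := by
    rw [hR, hC1, add_mul]
    have : K0 * 1 ≤ K0 * n := Nat.mul_le_mul_left _ (by omega)
    omega
  have hB : ∀ s < t, x s ∈ boxZ R := by
    intro s hs
    rw [mem_boxZ]
    have := g1 s hs.le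
    rw [hR]; push_cast; exact this
  have hnpos : (2 : ℝ) ≤ n := by exact_mod_cast hn
  constructor
  · have e1 := disc_identity H hx hbc h hb hc (boxZ R) t hB
    set S := ∑ v ∈ boxZ R, ∑ i ∈ Finset.range 4,
      (exits b c x r t v i : ℝ) * (h (succZ2 v i) - h v) with hS
    have e2 : |S| ≤ 8 * G * (1 + Real.log R) := by
      calc |S| ≤ ∑ v ∈ boxZ R, |∑ i ∈ Finset.range 4,
            (exits b c x r t v i : ℝ) * (h (succZ2 v i) - h v)| := Finset.abs_sum_le_sum_abs _ _
        _ ≤ ∑ v ∈ boxZ R, G * (1 / ((ringZ v : ℤ) : ℝ) ^ 2) := by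
            apply Finset.sum_le_sum
            intro v _
            exact (disc_local H h hh t v).trans (hG v)
        _ = G * ∑ v ∈ boxZ R, (1 / ((ringZ v : ℤ) : ℝ) ^ 2) := by rw [Finset.mul_sum]
        _ ≤ G * (8 * (1 + Real.log R)) := by
            apply mul_le_mul_of_nonneg_left _ hG0
            have := box_sum R
            have := harmonic_le_one_add_log R
            linarith
        _ = _ := by ring
    have e3 : Real.log R ≤ Real.log C1 + Real.log n := by
      have hC1p : (0 : ℝ) < C1 := by
        have : 0 < C1 := by omega
        exact_mod_cast this
      rw [← Real.log_mul (by positivity) (by positivity)]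
      apply Real.log_le_log
      · have : 0 < R := by omega
        exact_mod_cast this
      · exact_mod_cast hR1
    have e4 : |(n : ℝ) * h a - nvisits x t b| ≤ 1 + |S| := by
      have : (n : ℝ) * h a - nvisits x t b = (h (x t) - h a) - S := by
        rw [← hcast]; linarith
      rw [this]
      refine (abs_sub _ _).trans ?_
      have := h01 a
      have := h01 (x t)
      have : |h (x t) - h a| ≤ 1 := by rw [abs_le]; constructor <;> linarith
      linarith
    have e5 : h a - (nvisits x t b : ℝ) / n = ((n : ℝ) * h a - nvisits x t b) / n := by
      field_simp
    rw [e5, abs_div, abs_of_pos (show (0 : ℝ) < n by linarith)]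
    apply div_le_div_of_nonneg_right _ (by linarith)
    have l2 : 0 < Real.log 2 := Real.log_pos (by norm_num)
    have l3 : Real.log 2 ≤ Real.log n := Real.log_le_log (by norm_num) hnpos
    have lC : 0 ≤ Real.log C1 := Real.log_natCast_nonneg C1
    have e6 : 1 + 8 * G * (1 + Real.log C1) ≤
        (1 + 8 * G * (1 + Real.log C1)) / Real.log 2 * Real.log n := by
      rw [div_mul_eq_mul_div, le_div_iff₀ l2]
      apply mul_le_mul_of_nonneg_left l3
      positivity
    have e7 : 8 * G * (1 + Real.log R) ≤ 8 * G * (1 + (Real.log C1 + Real.log n)) := by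
      apply mul_le_mul_of_nonneg_left _ (by positivity)
      linarith
    rw [add_mul]
    linarith
  · have e1 : t ≤ (2 * R) ^ 2 * (4 * N) := by
      calc t = ∑ v ∈ boxZ R, nvisits x t v := time_eq x _ t hB
        _ ≤ (boxZ R).card • (4 * N) := Finset.sum_le_card_nsmul _ _ _ (fun v _ => g2 v)
        _ = _ := by rw [card_boxZ]; rfl
    have e2 : (2 * R) ^ 2 * (4 * N) ≤ (2 * (C1 * n)) ^ 2 * (4 * (2 * C0 * n)) := by gcongr
    have e3 : t ≤ 32 * C1 ^ 2 * C0 * n ^ 3 := by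
      refine (e1.trans e2).trans (le_of_eq ?_); ring
    exact_mod_cast e3

/-- the average over the four neighbours -/
noncomputable def avg4 (f : ℤ × ℤ → ℝ) (v : ℤ × ℤ) : ℝ :=
  (f (v.1 + 1, v.2) + f (v.1 - 1, v.2) + f (v.1, v.2 + 1) + f (v.1, v.2 - 1)) / 4

lemma tsum_pZ2 (f : ℤ × ℤ → ℝ) (v : ℤ × ℤ) : ∑' w, pZ2 v w * f w = avg4 f v := by
  obtain ⟨p, q⟩ := v
  rw [tsum_eq_sum (s := {(p + 1, q), (p - 1, q), (p, q + 1), (p, q - 1)})]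
  · rw [Finset.sum_insert, Finset.sum_insert, Finset.sum_insert, Finset.sum_singleton]
    · have e1 : pZ2 (p, q) (p + 1, q) = 1 / 4 := by simp [pZ2]
      have e2 : pZ2 (p, q) (p - 1, q) = 1 / 4 := by simp [pZ2]
      have e3 : pZ2 (p, q) (p, q + 1) = 1 / 4 := by simp [pZ2]
      have e4 : pZ2 (p, q) (p, q - 1) = 1 / 4 := by simp [pZ2]
      rw [e1, e2, e3, e4]
      simp only [avg4]; ring
    · simp only [Finset.mem_singleton, Prod.mk.injEq]; omega
    · simp only [Finset.mem_insert, Finset.mem_singleton, Prod.mk.injEq]; omega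
    · simp only [Finset.mem_insert, Finset.mem_singleton, Prod.mk.injEq]; omega
  · rintro ⟨w1, w2⟩ hw
    simp only [Finset.mem_insert, Finset.mem_singleton, Prod.mk.injEq] at hw
    have : ¬ (|p - w1| + |q - w2| = 1) := by
      intro h
      apply hw
      rcases abs_cases (p - w1) with h1 | h1 <;> rcases abs_cases (q - w2) with h2 | h2 <;> omega
    simp [pZ2, this]

lemma hitAux_01 (b c : ℤ × ℤ) (t : ℕ) : ∀ v, 0 ≤ hitAux pZ2 b c t v ∧ hitAux pZ2 b c t v ≤ 1 := by
  induction t with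
  | zero => intro v; simp only [hitAux]; split_ifs <;> norm_num
  | succ t ih =>
    intro v
    simp only [hitAux]
    split_ifs
    · norm_num
    · norm_num
    · rw [tsum_pZ2, avg4]
      have h1 := ih (v.1 + 1, v.2)
      have h2 := ih (v.1 - 1, v.2)
      have h3 := ih (v.1, v.2 + 1)
      have h4 := ih (v.1, v.2 - 1)
      constructor <;> linarith

lemma hitAux_mono (b c : ℤ × ℤ) (hbc : b ≠ c) (t : ℕ) :
    ∀ v, hitAux pZ2 b c t v ≤ hitAux pZ2 b c (t + 1) v := by
  induction t with
  | zero =>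
    intro v
    by_cases h : v = b
    · simp [hitAux, h]
    · have := (hitAux_01 b c 1 v).1
      simpa [hitAux, h] using this
  | succ t ih =>
    intro v
    rw [hitAux, hitAux]
    split_ifs
    · exact le_rfl
    · exact le_rfl
    · rw [tsum_pZ2, tsum_pZ2, avg4, avg4]
      have h1 := ih (v.1 + 1, v.2)
      have h2 := ih (v.1 - 1, v.2)
      have h3 := ih (v.1, v.2 + 1)
      have h4 := ih (v.1, v.2 - 1)
      linarith

lemma hit_tendsto (b c : ℤ × ℤ) (hbc : b ≠ c) (v : ℤ × ℤ) :
    Filter.Tendsto (fun t => hitAux pZ2 b c t v) Filter.atTop (nhds (hitProb pZ2 b c v)) := by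
  apply tendsto_atTop_ciSup
  · exact monotone_nat_of_le_succ (fun t => hitAux_mono b c hbc t v)
  · refine ⟨1, ?_⟩
    rintro _ ⟨t, rfl⟩
    exact (hitAux_01 b c t v).2

lemma hit_01 (b c : ℤ × ℤ) (hbc : b ≠ c) (v : ℤ × ℤ) :
    0 ≤ hitProb pZ2 b c v ∧ hitProb pZ2 b c v ≤ 1 :=
  ⟨ge_of_tendsto' (hit_tendsto b c hbc v) (fun t => (hitAux_01 b c t v).1),
   le_of_tendsto' (hit_tendsto b c hbc v) (fun t => (hitAux_01 b c t v).2)⟩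

lemma hit_b (b c : ℤ × ℤ) (hbc : b ≠ c) : hitProb pZ2 b c b = 1 := by
  refine tendsto_nhds_unique (hit_tendsto b c hbc b) ?_
  have : (fun t => hitAux pZ2 b c t b) = fun _ => 1 := by
    funext t; cases t <;> simp [hitAux]
  rw [this]; exact tendsto_const_nhds

lemma hit_c (b c : ℤ × ℤ) (hbc : b ≠ c) : hitProb pZ2 b c c = 0 := by
  refine tendsto_nhds_unique (hit_tendsto b c hbc c) ?_
  have : (fun t => hitAux pZ2 b c t c) = fun _ => 0 := by
    funext t; cases t <;> simp [hitAux, hbc.symm]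
  rw [this]; exact tendsto_const_nhds

lemma hit_harm (b c : ℤ × ℤ) (hbc : b ≠ c) (v : ℤ × ℤ) (hv : ¬ (v = b ∨ v = c)) :
    avg4 (hitProb pZ2 b c) v = hitProb pZ2 b c v := by
  push Not at hv
  refine tendsto_nhds_unique (f := fun t => avg4 (hitAux pZ2 b c t) v) ?_
    (((hit_tendsto b c hbc v).comp (Filter.tendsto_add_atTop_nat 1)).congr ?_) (l := Filter.atTop)
  · unfold avg4
    exact ((((hit_tendsto b c hbc _).add (hit_tendsto b c hbc _)).add
      (hit_tendsto b c hbc _)).add (hit_tendsto b c hbc _)).div_const 4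
  · intro t
    simp only [Function.comp]
    rw [hitAux, if_neg hv.1, if_neg hv.2, tsum_pZ2]

lemma hit_equiv (e : (ℤ × ℤ) ≃ (ℤ × ℤ)) (he : ∀ u v, pZ2 (e u) (e v) = pZ2 u v)
    (b c v : ℤ × ℤ) : hitProb pZ2 (e b) (e c) (e v) = hitProb pZ2 b c v := by
  have : ∀ t v, hitAux pZ2 (e b) (e c) t (e v) = hitAux pZ2 b c t v := by
    intro t
    induction t with
    | zero => intro v; simp [hitAux]
    | succ t ih =>
      intro v
      simp only [hitAux, EmbeddingLike.apply_eq_iff_eq]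
      split_ifs
      · rfl
      · rfl
      · rw [← e.tsum_eq]
        simp only [he, ih]
  simp only [hitProb, this]

/-- uniqueness of bounded harmonic functions, given a proper nonnegative harmonic function -/
lemma harm_le_zero (b c : ℤ × ℤ) (D g : ℤ × ℤ → ℝ) (M : ℝ)
    (hDM : ∀ v, D v ≤ M) (hDb : D b = 0) (hDc : D c = 0)
    (hD : ∀ v, ¬ (v = b ∨ v = c) → avg4 D v = D v)
    (hg0 : ∀ v, 0 ≤ g v) (hg : ∀ v, v ≠ b → avg4 g v = g v)
    (hgt : ∀ L : ℝ, {v | g v ≤ L}.Finite) (v : ℤ × ℤ) : D v ≤ 0 := by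
  have key : ∀ ε > 0, ∀ v, D v - ε * g v ≤ 0 := by
    intro ε hε
    by_contra hcon
    push Not at hcon
    obtain ⟨v0, hv0⟩ := hcon
    set u : ℤ × ℤ → ℝ := fun v => D v - ε * g v with hu
    have hPfin : {v | 0 < u v}.Finite := by
      refine (hgt (M / ε)).subset ?_
      intro w hw
      simp only [Set.mem_ofPred_eq, hu] at hw ⊢
      rw [le_div_iff₀ hε]
      have := hDM w
      linarith
    set P := hPfin.toFinset with hP
    have memP : ∀ w, w ∈ P ↔ 0 < u w := by intro w; simp [hP]
    obtain ⟨w, hw, hwm⟩ := Finset.exists_max_image P u ⟨v0, (memP v0).2 hv0⟩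
    obtain ⟨z, hz, hzm⟩ := Finset.exists_max_image (P.filter (fun y => u y = u w))
      (fun y => y.1) ⟨w, Finset.mem_filter.mpr ⟨hw, rfl⟩⟩
    rw [Finset.mem_filter] at hz
    have hmax : ∀ y, u y ≤ u w := by
      intro y
      by_cases hy : y ∈ P
      · exact hwm y hy
      · rw [memP] at hy
        have := (memP w).1 hw
        linarith
    have hupos := (memP z).1 hz.1
    have hzs : ¬ (z = b ∨ z = c) := by
      rintro (h | h)
      · rw [h] at hupos
        simp only [hu, hDb] at hupos
        nlinarith [hg0 b]
      · rw [h] at hupos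
        simp only [hu, hDc] at hupos
        nlinarith [hg0 c]
    have hharm : avg4 u z = u z := by
      have e1 := hD z hzs
      have e2 := hg z (fun h => hzs (Or.inl h))
      simp only [hu, avg4] at e1 e2 ⊢
      linear_combination e1 - ε * e2
    have m1 := hmax (z.1 + 1, z.2)
    have m2 := hmax (z.1 - 1, z.2)
    have m3 := hmax (z.1, z.2 + 1)
    have m4 := hmax (z.1, z.2 - 1)
    have heq : u (z.1 + 1, z.2) = u w := by
      rw [hz.2] at hharm
      simp only [avg4] at hharm
      linarith
    have := hzm (z.1 + 1, z.2) (by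
      rw [Finset.mem_filter, memP, heq]
      exact ⟨(memP w).1 hw, rfl⟩)
    simp at this
  by_contra h
  push Not at h
  have := key (D v / (2 * (g v + 1))) (div_pos h (by have := hg0 v; linarith)) v
  have hgv := hg0 v
  have : D v ≤ D v / (2 * (g v + 1)) * g v := by linarith
  rw [div_mul_eq_mul_div, le_div_iff₀ (by linarith)] at this
  nlinarith

lemma harm_eq_zero (b c : ℤ × ℤ) (D g : ℤ × ℤ → ℝ) (M : ℝ)
    (hDM : ∀ v, |D v| ≤ M) (hDb : D b = 0) (hDc : D c = 0)
    (hD : ∀ v, ¬ (v = b ∨ v = c) → avg4 D v = D v)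
    (hg0 : ∀ v, 0 ≤ g v) (hg : ∀ v, v ≠ b → avg4 g v = g v)
    (hgt : ∀ L : ℝ, {v | g v ≤ L}.Finite) (v : ℤ × ℤ) : D v = 0 := by
  apply le_antisymm
  · exact harm_le_zero b c D g M (fun v => (abs_le.mp (hDM v)).2) hDb hDc hD hg0 hg hgt v
  · have := harm_le_zero b c (fun v => - D v) g M
      (fun v => by have := (abs_le.mp (hDM v)).1; linarith) (by simp [hDb]) (by simp [hDc])
      (fun v hv => by have := hD v hv; simp only [avg4] at *; linarith) hg0 hg hgt v
    linarith

noncomputable def SS (θ : ℝ) : ℝ := Real.sqrt ((2 - Real.cos θ) ^ 2 - 1)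
noncomputable def qq (θ : ℝ) : ℝ := 2 - Real.cos θ - SS θ

lemma SS_sq (θ : ℝ) : SS θ ^ 2 = (2 - Real.cos θ) ^ 2 - 1 := by
  unfold SS
  rw [Real.sq_sqrt]
  nlinarith [Real.cos_le_one θ]

lemma SS_nonneg (θ : ℝ) : 0 ≤ SS θ := Real.sqrt_nonneg _

lemma qq_pos (θ : ℝ) : 0 < qq θ := by
  unfold qq
  have h1 := SS_sq θ
  have h2 := SS_nonneg θ
  have h3 := Real.cos_le_one θ
  nlinarith

lemma qq_eq (θ : ℝ) : qq θ ^ 2 + 1 = 2 * (2 - Real.cos θ) * qq θ := by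
  unfold qq
  have h1 := SS_sq θ
  nlinarith

lemma cos_bds {θ : ℝ} (h0 : 0 < θ) (h1 : θ ≤ Real.pi) :
    θ ^ 2 / 5 ≤ 1 - Real.cos θ ∧ 1 - Real.cos θ ≤ θ ^ 2 / 2 := by
  constructor
  · have h := Real.cos_le_one_sub_mul_cos_sq (x := θ) (by rw [abs_of_pos h0]; exact h1)
    have hpi : Real.pi ^ 2 ≤ 10 := by nlinarith [Real.pi_lt_d2, Real.pi_pos]
    have : (1 : ℝ) / 5 ≤ 2 / Real.pi ^ 2 := by
      rw [div_le_div_iff₀ (by norm_num) (by positivity)]; linarith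
    nlinarith [sq_nonneg θ]
  · have := Real.one_sub_sq_div_two_le_cos (x := θ)
    linarith

lemma SS_lb {θ : ℝ} (h0 : 0 < θ) (h1 : θ ≤ Real.pi) : θ / 2 ≤ SS θ := by
  have ⟨ha, hb⟩ := cos_bds h0 h1
  have hs := SS_sq θ
  have := SS_nonneg θ
  by_contra hc
  push Not at hc
  nlinarith [sq_nonneg (1 - Real.cos θ)]

lemma SS_ub {θ : ℝ} (h0 : 0 < θ) (h1 : θ ≤ Real.pi) : SS θ ≤ 2 * θ := by
  have ⟨ha, hb⟩ := cos_bds h0 h1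
  have hs := SS_sq θ
  have := SS_nonneg θ
  have hpi : θ ^ 2 ≤ 10 := by nlinarith [Real.pi_lt_d2, Real.pi_pos]
  have he : 0 ≤ 1 - Real.cos θ := by linarith [Real.cos_le_one θ]
  have he2 : (1 - Real.cos θ) ^ 2 ≤ (θ ^ 2 / 2) ^ 2 := by gcongr
  by_contra hc
  push Not at hc
  have h3 : (2 * θ) ^ 2 < SS θ ^ 2 := by gcongr
  nlinarith [sq_nonneg θ, mul_le_mul_of_nonneg_left hpi (sq_nonneg θ)]

lemma qq_ub {θ : ℝ} (h0 : 0 < θ) (h1 : θ ≤ Real.pi) : θ / 4 ≤ 1 - qq θ := by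
  have ⟨ha, hb⟩ := cos_bds h0 h1
  have hs := SS_sq θ
  have := SS_nonneg θ
  have hpi : θ ≤ 3.15 := by linarith [Real.pi_lt_d2]
  unfold qq
  by_contra hc
  push Not at hc
  have h3 : SS θ < (1 - Real.cos θ) + θ / 4 := by linarith
  have h4 : SS θ ^ 2 < ((1 - Real.cos θ) + θ / 4) ^ 2 := by gcongr
  norm_num at hpi
  have he : 0 ≤ 1 - Real.cos θ := by linarith [Real.cos_le_one θ]
  nlinarith [mul_le_mul_of_nonneg_left hpi he]

lemma qq_lb (θ : ℝ) : 1 - qq θ ≤ SS θ := by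
  unfold qq; linarith [Real.cos_le_one θ]

lemma qq_le {θ : ℝ} (h0 : 0 < θ) (h1 : θ ≤ Real.pi) : qq θ ≤ 1 := by
  linarith [qq_ub h0 h1]

lemma pow_sub_le {q : ℝ} (h0 : 0 ≤ q) (h1 : q ≤ 1) (m n : ℕ) :
    |q ^ m - q ^ n| ≤ |(m : ℝ) - n| * (1 - q) := by
  have key : ∀ m k : ℕ, |q ^ m - q ^ (m + k)| ≤ (k : ℝ) * (1 - q) := by
    intro m k
    have hb := one_add_mul_le_pow (a := q - 1) (by linarith) k
    have e : q ^ m - q ^ (m + k) = q ^ m * (1 - q ^ k) := by ring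
    have h2 : q ^ k ≤ 1 := pow_le_one₀ h0 h1
    have h3 : q ^ m ≤ 1 := pow_le_one₀ h0 h1
    have h4 : 0 ≤ q ^ m := pow_nonneg h0 _
    rw [e, abs_of_nonneg (mul_nonneg h4 (by linarith))]
    have h5 : 1 + (q - 1) = q := by ring
    rw [h5] at hb
    nlinarith
  rcases le_total m n with h | h
  · obtain ⟨k, rfl⟩ := Nat.exists_eq_add_of_le h
    have := key m k
    push_cast
    rw [show (m : ℝ) - (m + k) = -k by ring, abs_neg, abs_of_nonneg (a := (k : ℝ)) (Nat.cast_nonneg k)]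
    exact this
  · obtain ⟨k, rfl⟩ := Nat.exists_eq_add_of_le h
    have := key n k
    push_cast
    rw [abs_sub_comm, show (n : ℝ) + k - n = k by ring, abs_of_nonneg (a := (k : ℝ)) (Nat.cast_nonneg k)]
    exact this

lemma pow_exp_le {θ : ℝ} (h0 : 0 < θ) (h1 : θ ≤ Real.pi) (n : ℕ) :
    qq θ ^ n ≤ Real.exp (-((n : ℝ) / 4 * θ)) := by
  have h : qq θ ≤ Real.exp (-(θ / 4)) := by
    have := Real.add_one_le_exp (-(θ / 4))
    linarith [qq_ub h0 h1]
  calc qq θ ^ n ≤ Real.exp (-(θ / 4)) ^ n := pow_le_pow_left₀ (qq_pos θ).le h n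
    _ = _ := by rw [← Real.exp_nat_mul]; congr 1; ring

/-- numerator and kernel -/
noncomputable def KN (x y : ℤ) (θ : ℝ) : ℝ := 1 - qq θ ^ (y.natAbs) * Real.cos (x * θ)
noncomputable def KK (v : ℤ × ℤ) (θ : ℝ) : ℝ := KN v.1 v.2 θ / SS θ
noncomputable def AA (v : ℤ × ℤ) : ℝ := ∫ θ in (0 : ℝ)..Real.pi, KK v θ

lemma KN_nonneg (x y : ℤ) {θ : ℝ} (h0 : 0 < θ) (h1 : θ ≤ Real.pi) : 0 ≤ KN x y θ := by
  unfold KN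
  have h2 : qq θ ^ y.natAbs ≤ 1 := pow_le_one₀ (qq_pos θ).le (qq_le h0 h1)
  have h3 : 0 ≤ qq θ ^ y.natAbs := pow_nonneg (qq_pos θ).le _
  nlinarith [Real.cos_le_one (x * θ)]

lemma KN_sub_le (x y x' y' : ℤ) {θ : ℝ} (h0 : 0 < θ) (h1 : θ ≤ Real.pi) :
    |KN x y θ - KN x' y' θ| ≤ (2 * |(y : ℝ) - y'| + |(x : ℝ) - x'|) * θ := by
  unfold KN
  have hq0 := (qq_pos θ).le
  have hq1 := qq_le h0 h1
  have hp := pow_sub_le hq0 hq1 y'.natAbs y.natAbs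
  have hn : |((y'.natAbs : ℕ) : ℝ) - (y.natAbs : ℕ)| ≤ |(y : ℝ) - y'| := by
    rw [Nat.cast_natAbs, Nat.cast_natAbs]
    push_cast
    rw [abs_sub_comm (y : ℝ)]
    exact abs_abs_sub_abs_le _ _
  have hc := Real.abs_cos_sub_cos_le (x' * θ) (x * θ)
  have hc2 : |(x' : ℝ) * θ - x * θ| = |(x : ℝ) - x'| * θ := by
    rw [abs_sub_comm, ← sub_mul, abs_mul, abs_of_pos h0]
  rw [hc2] at hc
  have e : 1 - qq θ ^ y.natAbs * Real.cos (x * θ) - (1 - qq θ ^ y'.natAbs * Real.cos (x' * θ))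
      = (qq θ ^ y'.natAbs - qq θ ^ y.natAbs) * Real.cos (x' * θ)
        + qq θ ^ y.natAbs * (Real.cos (x' * θ) - Real.cos (x * θ)) := by ring
  rw [e]
  refine (abs_add_le _ _).trans ?_
  rw [abs_mul, abs_mul, add_mul]
  have hs : 1 - qq θ ≤ 2 * θ := (qq_lb θ).trans (SS_ub h0 h1)
  apply add_le_add
  · calc _ ≤ |qq θ ^ y'.natAbs - qq θ ^ y.natAbs| * 1 :=
          mul_le_mul_of_nonneg_left (Real.abs_cos_le_one _) (abs_nonneg _)
      _ ≤ |(y : ℝ) - y'| * (1 - qq θ) := by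
          rw [mul_one]
          exact hp.trans (mul_le_mul_of_nonneg_right hn (by linarith))
      _ ≤ |(y : ℝ) - y'| * (2 * θ) := mul_le_mul_of_nonneg_left hs (abs_nonneg _)
      _ = _ := by ring
  · have : |qq θ ^ y.natAbs| ≤ 1 := by
      rw [abs_of_nonneg (pow_nonneg hq0 _)]; exact pow_le_one₀ hq0 hq1
    calc _ ≤ 1 * |Real.cos (x' * θ) - Real.cos (x * θ)| :=
          mul_le_mul_of_nonneg_right this (abs_nonneg _)
      _ ≤ _ := by rw [one_mul]; exact hc

lemma KN_zero (θ : ℝ) : KN 0 0 θ = 0 := by simp [KN]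

lemma div_SS_le {θ : ℝ} (h0 : 0 < θ) (h1 : θ ≤ Real.pi) {N B : ℝ} (h : |N| ≤ B * θ) :
    |N / SS θ| ≤ 2 * B := by
  have hs := SS_lb h0 h1
  have hs0 : 0 < SS θ := by linarith
  rw [abs_div, abs_of_pos hs0, div_le_iff₀ hs0]
  have : 0 ≤ B := by
    by_contra hB
    push Not at hB
    nlinarith [abs_nonneg N]
  nlinarith

lemma KK_sub_le (v w : ℤ × ℤ) {θ : ℝ} (h0 : 0 < θ) (h1 : θ ≤ Real.pi) :
    |KK v θ - KK w θ| ≤ 2 * (2 * |(v.2 : ℝ) - w.2| + |(v.1 : ℝ) - w.1|) := by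
  unfold KK
  rw [← sub_div]
  exact div_SS_le h0 h1 (KN_sub_le _ _ _ _ h0 h1)

lemma KK_bd (v : ℤ × ℤ) {θ : ℝ} (h0 : 0 < θ) (h1 : θ ≤ Real.pi) :
    |KK v θ| ≤ 2 * (2 * |(v.2 : ℝ)| + |(v.1 : ℝ)|) := by
  have := KK_sub_le v (0, 0) h0 h1
  simpa [KK, KN_zero] using this

lemma KK_nonneg (v : ℤ × ℤ) {θ : ℝ} (h0 : 0 < θ) (h1 : θ ≤ Real.pi) : 0 ≤ KK v θ :=
  div_nonneg (KN_nonneg _ _ h0 h1) (SS_nonneg _)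

lemma SS_cont : Continuous SS := by unfold SS; fun_prop
lemma qq_cont : Continuous qq := by
  have := SS_cont
  unfold qq; fun_prop

lemma KK_meas (v : ℤ × ℤ) : Measurable (KK v) := by
  unfold KK KN
  have h1 := qq_cont
  have h2 := SS_cont.measurable
  have h3 : Measurable (fun θ => 1 - qq θ ^ (v.2.natAbs) * Real.cos (v.1 * θ)) := by
    apply Continuous.measurable; fun_prop
  exact h3.div h2

lemma KK_int (v : ℤ × ℤ) : IntervalIntegrable (KK v) MeasureTheory.volume 0 Real.pi := by
  rw [intervalIntegrable_iff, Set.uIoc_of_le Real.pi_pos.le]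
  refine MeasureTheory.Measure.integrableOn_of_bounded
    (M := 2 * (2 * |(v.2 : ℝ)| + |(v.1 : ℝ)|)) (by simp) (KK_meas v).aestronglyMeasurable ?_
  rw [MeasureTheory.ae_restrict_iff' measurableSet_Ioc]
  exact Filter.Eventually.of_forall fun θ hθ => KK_bd v hθ.1 hθ.2

lemma AA_nonneg (v : ℤ × ℤ) : 0 ≤ AA v := by
  unfold AA
  rw [intervalIntegral.integral_of_le Real.pi_pos.le]
  exact MeasureTheory.setIntegral_nonneg measurableSet_Ioc fun θ hθ => KK_nonneg v hθ.1 hθ.2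

lemma AA_sub_le (v w : ℤ × ℤ) :
    |AA v - AA w| ≤ Real.pi * (2 * (2 * |(v.2 : ℝ) - w.2| + |(v.1 : ℝ) - w.1|)) := by
  unfold AA
  rw [← intervalIntegral.integral_sub (KK_int v) (KK_int w)]
  have := intervalIntegral.norm_integral_le_of_norm_le_const (a := 0) (b := Real.pi)
    (f := fun θ => KK v θ - KK w θ) (C := 2 * (2 * |(v.2 : ℝ) - w.2| + |(v.1 : ℝ) - w.1|)) ?_
  · rw [Real.norm_eq_abs, sub_zero, abs_of_pos Real.pi_pos] at this
    linarith
  · intro θ hθ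
    rw [Set.uIoc_of_le Real.pi_pos.le] at hθ
    exact KK_sub_le v w hθ.1 hθ.2

lemma KN_lap (x y : ℤ) (θ : ℝ) :
    (KN (x+1) y θ + KN (x-1) y θ + KN x (y+1) θ + KN x (y-1) θ) / 4 - KN x y θ
      = if y = 0 then SS θ * (Real.cos (x * θ) / 2) else 0 := by
  have hc : Real.cos (((x + 1 : ℤ) : ℝ) * θ) + Real.cos (((x - 1 : ℤ) : ℝ) * θ)
      = 2 * Real.cos (x * θ) * Real.cos θ := by
    push_cast
    rw [add_mul, sub_mul, one_mul, Real.cos_add, Real.cos_sub]; ring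
  have hq := qq_eq θ
  unfold KN
  split_ifs with hy
  · subst hy
    simp only [zero_add, zero_sub, Int.natAbs_zero, Int.natAbs_one, Int.natAbs_neg, pow_zero,
      pow_one, one_mul]
    have hqs : qq θ = 2 - Real.cos θ - SS θ := rfl
    rw [hqs]
    linear_combination (-1/4 : ℝ) * hc
  · have key : qq θ ^ (y+1).natAbs + qq θ ^ (y-1).natAbs
        = 2 * (2 - Real.cos θ) * qq θ ^ y.natAbs := by
      rcases lt_or_gt_of_ne hy with h | h
      · obtain ⟨n, rfl⟩ : ∃ n : ℕ, y = -((n : ℤ) + 1) := ⟨(-y-1).toNat, by omega⟩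
        have e1 : (-((n : ℤ) + 1) + 1).natAbs = n := by omega
        have e2 : (-((n : ℤ) + 1) - 1).natAbs = n + 2 := by omega
        have e3 : (-((n : ℤ) + 1)).natAbs = n + 1 := by omega
        rw [e1, e2, e3]
        linear_combination (qq θ ^ n) * hq
      · obtain ⟨n, rfl⟩ : ∃ n : ℕ, y = ((n : ℤ) + 1) := ⟨(y-1).toNat, by omega⟩
        have e1 : (((n : ℤ) + 1) + 1).natAbs = n + 2 := by omega
        have e2 : (((n : ℤ) + 1) - 1).natAbs = n := by omega
        have e3 : (((n : ℤ) + 1)).natAbs = n + 1 := by omega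
        rw [e1, e2, e3]
        linear_combination (qq θ ^ n) * hq
    linear_combination (-1/4 : ℝ) * qq θ ^ y.natAbs * hc + (-1/4 : ℝ) * Real.cos (x * θ) * key

lemma AA_lap (v : ℤ × ℤ) :
    avg4 AA v - AA v = if v = (0, 0) then Real.pi / 2 else 0 := by
  obtain ⟨x, y⟩ := v
  have e : avg4 AA (x, y) - AA (x, y) = ∫ θ in (0 : ℝ)..Real.pi,
      ((KK (x+1, y) θ + KK (x-1, y) θ + KK (x, y+1) θ + KK (x, y-1) θ) / 4 - KK (x, y) θ) := by
    have i1 := KK_int (x+1, y)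
    have i2 := KK_int (x-1, y)
    have i3 := KK_int (x, y+1)
    have i4 := KK_int (x, y-1)
    have i5 := KK_int (x, y)
    rw [intervalIntegral.integral_sub ((((i1.add i2).add i3).add i4).div_const 4) i5,
      intervalIntegral.integral_div, intervalIntegral.integral_add ((i1.add i2).add i3) i4,
      intervalIntegral.integral_add (i1.add i2) i3, intervalIntegral.integral_add i1 i2]
    rfl
  have e2 : avg4 AA (x, y) - AA (x, y) = ∫ θ in (0 : ℝ)..Real.pi,
      (if y = 0 then (Real.cos (x * θ) / 2) else 0) := by
    rw [e]
    apply intervalIntegral.integral_congr_uIoo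
    intro θ hθ
    rw [Set.uIoo_of_le Real.pi_pos.le] at hθ
    have hs : 0 < SS θ := by linarith [SS_lb hθ.1 hθ.2.le, hθ.1]
    have := KN_lap x y θ
    simp only [KK]
    have e3 : (KN (x+1) y θ / SS θ + KN (x-1) y θ / SS θ + KN x (y+1) θ / SS θ
        + KN x (y-1) θ / SS θ) / 4 - KN x y θ / SS θ =
        ((KN (x+1) y θ + KN (x-1) y θ + KN x (y+1) θ + KN x (y-1) θ) / 4 - KN x y θ) / SS θ := by
      ring
    rw [e3, this]
    split_ifs
    · field_simp
    · simp
  rw [e2]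
  by_cases hy : y = 0
  · subst hy
    by_cases hx : x = 0
    · subst hx; simp; ring
    · have hx' : (x : ℝ) ≠ 0 := by exact_mod_cast hx
      simp only [if_true, intervalIntegral.integral_div]
      rw [intervalIntegral.integral_comp_mul_left (f := Real.cos) hx']
      simp [hx, Real.sin_int_mul_pi]
  · simp [hy]

lemma AA_growth (v : ℤ × ℤ) (hv : v.2 ≠ 0) :
    1 / 10 * Real.log (Real.pi * (v.2.natAbs : ℝ)) ≤ AA v := by
  have hY : (1 : ℝ) ≤ (v.2.natAbs : ℝ) := by
    exact_mod_cast Nat.one_le_iff_ne_zero.mpr (by simpa using hv)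
  set Y : ℝ := (v.2.natAbs : ℝ) with hYd
  have hY0 : 0 < 1 / Y := by positivity
  have hYp : 1 / Y ≤ Real.pi := by
    have : 1 / Y ≤ 1 := by rw [div_le_one (by linarith)]; exact hY
    linarith [Real.pi_gt_three]
  have h1 : ∫ θ in (1 / Y)..Real.pi, KK v θ ≤ AA v := by
    unfold AA
    apply intervalIntegral.integral_mono_interval hY0.le hYp le_rfl
    · rw [Filter.EventuallyLE, MeasureTheory.ae_restrict_iff' measurableSet_Ioc]
      exact Filter.Eventually.of_forall fun θ hθ => KK_nonneg v hθ.1 hθ.2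
    · exact KK_int v
  have hsub : Set.uIcc (1 / Y) Real.pi ⊆ Set.uIcc 0 Real.pi := by
    rw [Set.uIcc_of_le hYp, Set.uIcc_of_le Real.pi_pos.le]
    exact Set.Icc_subset_Icc_left hY0.le
  have hni : (0 : ℝ) ∉ Set.uIcc (1 / Y) Real.pi := by
    rw [Set.uIcc_of_le hYp]; intro h; linarith [h.1]
  have h2 : ∫ θ in (1 / Y)..Real.pi, (1 / 10 * (1 / θ)) ≤ ∫ θ in (1 / Y)..Real.pi, KK v θ := by
    apply intervalIntegral.integral_mono_on hYp
    · apply IntervalIntegrable.const_mul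
      exact intervalIntegral.intervalIntegrable_one_div
        (fun x hx h => hni (h ▸ hx)) continuousOn_id
    · exact (KK_int v).mono_set hsub
    · intro θ hθ
      have h0 : 0 < θ := by linarith [hθ.1]
      have hs := SS_ub h0 hθ.2
      have hs0 : 0 < SS θ := by linarith [SS_lb h0 hθ.2]
      have hq := pow_exp_le h0 hθ.2 v.2.natAbs
      have hYt : 1 ≤ Y * θ := by
        have := hθ.1
        rw [div_le_iff₀ (by linarith)] at this
        linarith
      have hexp : Real.exp (-(Y / 4 * θ)) ≤ 4 / 5 := by
        have h5 : Real.exp (-(Y / 4 * θ)) ≤ Real.exp (-(1/4)) := by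
          apply Real.exp_le_exp.mpr; linarith
        have h6 := Real.add_one_le_exp (1/4 : ℝ)
        have h7 : Real.exp (-(1/4 : ℝ)) * Real.exp (1/4) = 1 := by
          rw [← Real.exp_add]; simp
        nlinarith [Real.exp_pos (-(1/4 : ℝ))]
      have hp : 0 ≤ qq θ ^ v.2.natAbs := pow_nonneg (qq_pos θ).le _
      unfold KK KN
      have hn : 1 / 5 ≤ 1 - qq θ ^ v.2.natAbs * Real.cos (v.1 * θ) := by
        nlinarith [Real.cos_le_one (v.1 * θ)]
      rw [le_div_iff₀ hs0]
      calc 1 / 10 * (1 / θ) * SS θ ≤ 1 / 10 * (1 / θ) * (2 * θ) := by gcongr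
        _ = 1 / 5 := by field_simp; norm_num
        _ ≤ _ := hn
  have h3 : ∫ θ in (1 / Y)..Real.pi, (1 / 10 * (1 / θ)) = 1 / 10 * Real.log (Real.pi * Y) := by
    rw [intervalIntegral.integral_const_mul, integral_one_div hni]
    congr 2
    field_simp
  linarith

/-- A finite-sublevel harmonic function away from `b`. -/
noncomputable def GG (b v : ℤ × ℤ) : ℝ :=
  AA (v.1 - b.1, v.2 - b.2) + AA (v.2 - b.2, v.1 - b.1)

lemma GG_nonneg (b v : ℤ × ℤ) : 0 ≤ GG b v := add_nonneg (AA_nonneg _) (AA_nonneg _)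

lemma AA_shift_lap (b v : ℤ × ℤ) :
    avg4 (fun v => AA (v.1 - b.1, v.2 - b.2)) v - AA (v.1 - b.1, v.2 - b.2)
      = if v = b then Real.pi / 2 else 0 := by
  have := AA_lap (v.1 - b.1, v.2 - b.2)
  have h2 : ((v.1 - b.1, v.2 - b.2) = ((0, 0) : ℤ × ℤ)) ↔ v = b := by
    rw [Prod.ext_iff, Prod.ext_iff]; simp [sub_eq_zero]
  simp only [h2] at this
  rw [← this]
  simp only [avg4]
  have e1 : ∀ a b : ℤ, a + 1 - b = a - b + 1 := fun a b => by ring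
  have e2 : ∀ a b : ℤ, a - 1 - b = a - b - 1 := fun a b => by ring
  simp only [e1, e2]

lemma GG_harm (b v : ℤ × ℤ) (hv : v ≠ b) : avg4 (GG b) v = GG b v := by
  have h1 := AA_shift_lap b v
  have h2 := AA_shift_lap (b.2, b.1) (v.2, v.1)
  have h3 : ((v.2, v.1) : ℤ × ℤ) ≠ (b.2, b.1) := by
    intro h; apply hv; simp only [Prod.mk.injEq] at h; exact Prod.ext h.2 h.1
  rw [if_neg hv] at h1
  rw [if_neg h3] at h2
  simp only [avg4, GG] at *
  linarith

lemma GG_fin (b : ℤ × ℤ) (L : ℝ) : {v | GG b v ≤ L}.Finite := by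
  obtain ⟨N, hN⟩ := exists_nat_gt (Real.exp (10 * L))
  have key : ∀ w : ℤ × ℤ, AA w ≤ L → w.2.natAbs ≤ N := by
    intro w hw
    by_contra hc
    push Not at hc
    have h0 : w.2 ≠ 0 := by intro h; simp [h] at hc
    have h1 := AA_growth w h0
    have hY : (N : ℝ) ≤ w.2.natAbs := by exact_mod_cast hc.le
    have hlt : Real.exp (10 * L) < Real.pi * (w.2.natAbs : ℝ) := by
      have := Real.pi_gt_three
      nlinarith [Real.exp_pos (10 * L)]
    have := (Real.lt_log_iff_exp_lt (by linarith [Real.exp_pos (10 * L)])).mpr hlt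
    linarith
  refine ((Set.finite_Icc (b.1 - N) (b.1 + N)).prod (Set.finite_Icc (b.2 - N) (b.2 + N))).subset ?_
  intro v hv
  have hv' : GG b v ≤ L := hv
  unfold GG at hv'
  have h1 := key _ (by linarith [AA_nonneg (v.2 - b.2, v.1 - b.1)] :
    AA (v.1 - b.1, v.2 - b.2) ≤ L)
  have h2 := key _ (by linarith [AA_nonneg (v.1 - b.1, v.2 - b.2)] :
    AA (v.2 - b.2, v.1 - b.1) ≤ L)
  simp only at h1 h2
  simp only [Set.mem_prod, Set.mem_Icc]
  omega

noncomputable def FF (b c v : ℤ × ℤ) : ℝ :=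
  AA (v.1 - b.1, v.2 - b.2) - AA (v.1 - c.1, v.2 - c.2)

lemma FF_bdd (b c : ℤ × ℤ) : ∃ M, ∀ v, |FF b c v| ≤ M := by
  refine ⟨Real.pi * (2 * (2 * |(c.2 : ℝ) - b.2| + |(c.1 : ℝ) - b.1|)), fun v => ?_⟩
  have := AA_sub_le (v.1 - b.1, v.2 - b.2) (v.1 - c.1, v.2 - c.2)
  push_cast at this
  simpa [FF] using this

lemma FF_lap (b c v : ℤ × ℤ) : avg4 (FF b c) v - FF b c v =
    (if v = b then Real.pi / 2 else 0) - (if v = c then Real.pi / 2 else 0) := by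
  rw [← AA_shift_lap b v, ← AA_shift_lap c v]
  simp only [avg4, FF]
  ring

lemma hit_FF (b c : ℤ × ℤ) (hbc : b ≠ c) :
    FF b c b - FF b c c ≠ 0 ∧
    ∀ v, hitProb pZ2 b c v = (FF b c v - FF b c c) / (FF b c b - FF b c c) := by
  obtain ⟨M, hM⟩ := FF_bdd b c
  have hD : ∀ v, FF b c v - FF b c c - (FF b c b - FF b c c) * hitProb pZ2 b c v = 0 := by
    refine harm_eq_zero b c _ (GG b) (M + M + (M + M)) ?_ ?_ ?_ ?_ (GG_nonneg b) (GG_harm b)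
      (GG_fin b)
    · intro v
      have h01 := hit_01 b c hbc v
      have h2 : |FF b c b - FF b c c| ≤ M + M := (abs_sub _ _).trans (add_le_add (hM _) (hM _))
      have h1 : |FF b c v - FF b c c| ≤ M + M := (abs_sub _ _).trans (add_le_add (hM _) (hM _))
      refine (abs_sub _ _).trans (add_le_add h1 ?_)
      rw [abs_mul, abs_of_nonneg h01.1]
      nlinarith [abs_nonneg (FF b c b - FF b c c)]
    · rw [hit_b b c hbc]; ring
    · rw [hit_c b c hbc]; ring
    · intro v hv
      have h1 := hit_harm b c hbc v hv
      have h2 := FF_lap b c v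
      push Not at hv
      rw [if_neg hv.1, if_neg hv.2] at h2
      simp only [avg4] at *
      linear_combination h2 - (FF b c b - FF b c c) * h1
  have hne : FF b c b - FF b c c ≠ 0 := by
    intro h0
    have hcst : ∀ v, FF b c v = FF b c c := by
      intro v
      have := hD v
      rw [h0] at this
      linarith
    have h2 := FF_lap b c b
    rw [if_pos rfl, if_neg hbc] at h2
    simp only [avg4, hcst] at h2
    linarith [Real.pi_pos]
  refine ⟨hne, fun v => ?_⟩
  rw [eq_div_iff hne]
  linarith [hD v]

noncomputable def ZZ (θ : ℝ) (n : ℕ) (k : ℤ) : ℂ :=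
  ((qq θ ^ n : ℝ) : ℂ) * Complex.exp (Complex.I * (((k : ℝ) * θ : ℝ) : ℂ))

lemma ZZ_re (θ : ℝ) (n : ℕ) (k : ℤ) : (ZZ θ n k).re = qq θ ^ n * Real.cos (k * θ) := by
  unfold ZZ
  rw [Complex.re_ofReal_mul, mul_comm Complex.I, Complex.exp_ofReal_mul_I_re]

lemma ZZ_mul (θ : ℝ) (n n' : ℕ) (k k' : ℤ) :
    ZZ θ n k * ZZ θ n' k' = ZZ θ (n + n') (k + k') := by
  unfold ZZ
  have : Complex.exp (Complex.I * ((((k + k' : ℤ) : ℝ) * θ : ℝ) : ℂ))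
      = Complex.exp (Complex.I * (((k : ℝ) * θ : ℝ) : ℂ))
        * Complex.exp (Complex.I * (((k' : ℝ) * θ : ℝ) : ℂ)) := by
    rw [← Complex.exp_add]; congr 1; push_cast; ring
  rw [this]; push_cast; ring

lemma ZZ_zero (θ : ℝ) : ZZ θ 0 0 = 1 := by simp [ZZ]

lemma norm_expI (t : ℝ) : ‖Complex.exp (Complex.I * (t : ℂ))‖ = 1 := by
  rw [mul_comm]; exact Complex.norm_exp_ofReal_mul_I t

lemma ZZ_norm (θ : ℝ) (n : ℕ) (k : ℤ) : ‖ZZ θ n k‖ = qq θ ^ n := by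
  unfold ZZ
  rw [norm_mul, norm_expI, mul_one, Complex.norm_real, Real.norm_eq_abs,
    abs_of_nonneg (pow_nonneg (qq_pos θ).le _)]

lemma ZZ_sub_le {θ : ℝ} (h0 : 0 < θ) (h1 : θ ≤ Real.pi) (n n' : ℕ) (k k' : ℤ) :
    ‖ZZ θ n k - ZZ θ n' k'‖ ≤ (2 * |(n : ℝ) - n'| + |(k : ℝ) - k'|) * θ := by
  have e : ZZ θ n k - ZZ θ n' k' =
      ((qq θ ^ n - qq θ ^ n' : ℝ) : ℂ) * Complex.exp (Complex.I * (((k : ℝ) * θ : ℝ) : ℂ))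
      + ((qq θ ^ n' : ℝ) : ℂ) * (Complex.exp (Complex.I * (((k' : ℝ) * θ : ℝ) : ℂ)) *
        (Complex.exp (Complex.I * ((((k : ℝ) - k') * θ : ℝ) : ℂ)) - 1)) := by
    unfold ZZ
    rw [mul_sub, ← Complex.exp_add]
    have : Complex.I * (((k' : ℝ) * θ : ℝ) : ℂ) + Complex.I * ((((k : ℝ) - k') * θ : ℝ) : ℂ)
      = Complex.I * (((k : ℝ) * θ : ℝ) : ℂ) := by push_cast; ring
    rw [this]; push_cast; ring
  rw [e]
  refine (norm_add_le _ _).trans ?_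
  rw [norm_mul, norm_mul, norm_mul, norm_expI, norm_expI, mul_one, one_mul, Complex.norm_real,
    Complex.norm_real, Real.norm_eq_abs, Real.norm_eq_abs, add_mul]
  have hq0 := (qq_pos θ).le
  have hq1 := qq_le h0 h1
  have hs : 1 - qq θ ≤ 2 * θ := (qq_lb θ).trans (SS_ub h0 h1)
  apply add_le_add
  · calc _ ≤ |(n : ℝ) - n'| * (1 - qq θ) := pow_sub_le hq0 hq1 n n'
      _ ≤ |(n : ℝ) - n'| * (2 * θ) := mul_le_mul_of_nonneg_left hs (abs_nonneg _)
      _ = _ := by ring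
  · have h3 : |qq θ ^ n'| ≤ 1 := by
      rw [abs_of_nonneg (pow_nonneg hq0 _)]; exact pow_le_one₀ hq0 hq1
    have h4 := Real.norm_exp_I_mul_ofReal_sub_one_le (x := ((k : ℝ) - k') * θ)
    rw [Real.norm_eq_abs, abs_mul, abs_of_pos h0] at h4
    calc _ ≤ 1 * _ := mul_le_mul_of_nonneg_right h3 (norm_nonneg _)
      _ ≤ _ := by rw [one_mul]; exact h4

lemma num_bd {θ : ℝ} (h0 : 0 < θ) (h1 : θ ≤ Real.pi) (m e2 β γ : ℕ) (x e1 p r : ℤ)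
    (he2 : e2 ≤ 1) (he1 : |e1| ≤ 1) :
    |qq θ ^ (m + e2 + β) * Real.cos ((x + e1 + p : ℤ) * θ)
      - qq θ ^ (m + e2 + γ) * Real.cos ((x + e1 + r : ℤ) * θ)
      - qq θ ^ (m + β) * Real.cos ((x + p : ℤ) * θ)
      + qq θ ^ (m + γ) * Real.cos ((x + r : ℤ) * θ)|
    ≤ (3 * (2 * |(β : ℝ) - γ| + |(p : ℝ) - r|) * (θ * Real.exp (-((m : ℝ) / 4 * θ)))) * θ := by
  rw [← ZZ_re, ← ZZ_re, ← ZZ_re, ← ZZ_re, ← Complex.sub_re, ← Complex.sub_re, ← Complex.add_re]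
  refine (Complex.abs_re_le_norm _).trans ?_
  have e : ZZ θ (m + e2 + β) (x + e1 + p) - ZZ θ (m + e2 + γ) (x + e1 + r) - ZZ θ (m + β) (x + p)
      + ZZ θ (m + γ) (x + r)
      = ZZ θ m x * (ZZ θ e2 e1 - ZZ θ 0 0) * (ZZ θ β p - ZZ θ γ r) := by
    rw [← ZZ_mul, ← ZZ_mul θ (m + e2) γ, ← ZZ_mul θ m e2, ← ZZ_mul θ m β, ← ZZ_mul θ m γ, ZZ_zero]
    ring
  rw [e, norm_mul, norm_mul, ZZ_norm]
  have a1 := pow_exp_le h0 h1 m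
  have a2 : ‖ZZ θ e2 e1 - ZZ θ 0 0‖ ≤ 3 * θ := by
    refine (ZZ_sub_le h0 h1 _ _ _ _).trans ?_
    have t1 : |(e2 : ℝ) - (0 : ℕ)| ≤ 1 := by
      rw [Nat.cast_zero, sub_zero, abs_of_nonneg (Nat.cast_nonneg _)]; exact_mod_cast he2
    have t2 : |(e1 : ℝ) - (0 : ℤ)| ≤ 1 := by
      rw [Int.cast_zero, sub_zero]; exact_mod_cast he1
    nlinarith
  have a3 := ZZ_sub_le h0 h1 β γ p r
  have h3 : 0 ≤ qq θ ^ m := pow_nonneg (qq_pos θ).le _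
  calc _ ≤ Real.exp (-((m : ℝ) / 4 * θ)) * (3 * θ) *
        ((2 * |(β : ℝ) - γ| + |(p : ℝ) - r|) * θ) := by
        gcongr
    _ = _ := by ring

lemma int_bd {k : ℝ} (hk : 0 < k) :
    IntervalIntegrable (fun θ => θ * Real.exp (-(k * θ))) MeasureTheory.volume 0 Real.pi ∧
    ∫ θ in (0 : ℝ)..Real.pi, θ * Real.exp (-(k * θ)) ≤ 1 / k ^ 2 := by
  have hi : IntervalIntegrable (fun θ => θ * Real.exp (-(k * θ))) MeasureTheory.volume 0 Real.pi :=
    Continuous.intervalIntegrable (by fun_prop) _ _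
  refine ⟨hi, ?_⟩
  rw [intervalIntegral.integral_eq_sub_of_hasDerivAt
    (f := fun θ => -((θ / k + 1 / k ^ 2) * Real.exp (-(k * θ)))) _ hi]
  · have := Real.pi_pos
    have : 0 ≤ (Real.pi / k + 1 / k ^ 2) * Real.exp (-(k * Real.pi)) := by positivity
    simp only [zero_div, mul_zero, neg_zero, Real.exp_zero, zero_add, mul_one]
    linarith
  · intro θ _
    have d1 : HasDerivAt (fun θ : ℝ => -(k * θ)) (-(k * 1)) θ :=
      ((hasDerivAt_id θ).const_mul k).neg
    have d2 : HasDerivAt (fun θ : ℝ => θ / k + 1 / k ^ 2) (1 / k) θ :=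
      ((hasDerivAt_id θ).div_const k).add_const _
    have d3 := (d2.mul d1.exp).neg
    have e : -(1 / k * Real.exp (-(k * θ)) + (θ / k + 1 / k ^ 2) *
        (Real.exp (-(k * θ)) * -(k * 1))) = θ * Real.exp (-(k * θ)) := by
      field_simp
      ring
    rw [e] at d3
    exact d3

lemma FF_grad (b c : ℤ × ℤ) : ∃ D : ℝ, 0 ≤ D ∧ ∀ (m : ℕ) (x e1 : ℤ) (e2 : ℕ), 1 ≤ m → e2 ≤ 1 →
    |e1| ≤ 1 →
    |FF b c (x + e1, max b.2 c.2 + m + e2) - FF b c (x, max b.2 c.2 + m)| ≤ D / (m : ℝ) ^ 2 := by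
  obtain ⟨β, hβ⟩ : ∃ β : ℕ, (β : ℤ) = max b.2 c.2 - b.2 := ⟨(max b.2 c.2 - b.2).toNat, by omega⟩
  obtain ⟨γ, hγ⟩ : ∃ γ : ℕ, (γ : ℤ) = max b.2 c.2 - c.2 := ⟨(max b.2 c.2 - c.2).toNat, by omega⟩
  set B : ℝ := 2 * (3 * (2 * |(β : ℝ) - γ| + |((-b.1 : ℤ) : ℝ) - (-c.1 : ℤ)|)) with hB
  have hB0 : 0 ≤ B := by positivity
  refine ⟨B * 16, by positivity, ?_⟩
  intro m x e1 e2 hm he2 he1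
  have hm0 : (0 : ℝ) < m := by exact_mod_cast hm
  obtain ⟨hi, hI⟩ := int_bd (k := (m : ℝ) / 4) (by positivity)
  set M := max b.2 c.2
  have e : FF b c (x + e1, M + m + e2) - FF b c (x, M + m) = ∫ θ in (0 : ℝ)..Real.pi,
      (KK (x + e1 - b.1, M + m + e2 - b.2) θ - KK (x + e1 - c.1, M + m + e2 - c.2) θ
        - (KK (x - b.1, M + m - b.2) θ - KK (x - c.1, M + m - c.2) θ)) := by
    have i1 := KK_int (x + e1 - b.1, M + m + e2 - b.2)
    have i2 := KK_int (x + e1 - c.1, M + m + e2 - c.2)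
    have i3 := KK_int (x - b.1, M + m - b.2)
    have i4 := KK_int (x - c.1, M + m - c.2)
    rw [intervalIntegral.integral_sub (i1.sub i2) (i3.sub i4), intervalIntegral.integral_sub i1 i2,
      intervalIntegral.integral_sub i3 i4]
    rfl
  rw [e, ← Real.norm_eq_abs]
  refine (intervalIntegral.norm_integral_le_of_norm_le Real.pi_pos.le
    (g := fun θ => B * (θ * Real.exp (-((m : ℝ) / 4 * θ)))) ?_ (hi.const_mul B)).trans ?_
  · refine Filter.Eventually.of_forall fun θ hθ => ?_
    have hn := num_bd hθ.1 hθ.2 m e2 β γ x e1 (-b.1) (-c.1) he2 he1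
    have h2 := div_SS_le hθ.1 hθ.2 hn
    rw [Real.norm_eq_abs]
    have n1 : (M + m + e2 - b.2).natAbs = m + e2 + β := by omega
    have n2 : (M + m + e2 - c.2).natAbs = m + e2 + γ := by omega
    have n3 : (M + m - b.2).natAbs = m + β := by omega
    have n4 : (M + m - c.2).natAbs = m + γ := by omega
    simp only [KK, KN, n1, n2, n3, n4]
    rw [← abs_neg]
    refine le_trans (le_of_eq ?_) (h2.trans (le_of_eq ?_))
    · congr 1
      simp only [← sub_eq_add_neg]
      ring
    · rw [hB]; ring
  · rw [intervalIntegral.integral_const_mul]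
    calc _ ≤ B * (1 / ((m : ℝ) / 4) ^ 2) := mul_le_mul_of_nonneg_left hI hB0
      _ = _ := by field_simp; norm_num

noncomputable def nb (h : ℤ × ℤ → ℝ) (v : ℤ × ℤ) : ℝ :=
  |h (v.1 + 1, v.2) - h v| + |h (v.1 - 1, v.2) - h v| + |h (v.1, v.2 + 1) - h v|
    + |h (v.1, v.2 - 1) - h v|

lemma nb_up (b c : ℤ × ℤ) (hbc : b ≠ c) : ∃ C : ℝ, ∃ Y : ℤ, 0 ≤ C ∧ 1 ≤ Y ∧
    ∀ v : ℤ × ℤ, Y ≤ v.2 → nb (hitProb pZ2 b c) v ≤ C / (v.2 : ℝ) ^ 2 := by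
  obtain ⟨D, hD0, hD⟩ := FF_grad b c
  obtain ⟨hne, hit⟩ := hit_FF b c hbc
  set E := |FF b c b - FF b c c| with hE
  have hE0 : 0 < E := abs_pos.mpr hne
  have hdiff : ∀ u v, |hitProb pZ2 b c u - hitProb pZ2 b c v| = |FF b c u - FF b c v| / E := by
    intro u v
    rw [hit u, hit v, ← sub_div, abs_div]
    congr 2; ring
  refine ⟨4 * (4 * (D / E)), 2 * |max b.2 c.2| + 2, by positivity, by have := abs_nonneg (max b.2 c.2); omega, ?_⟩
  rintro ⟨x, y⟩ hy
  simp only at hy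
  have habs := le_abs_self (max b.2 c.2)
  have hab0 := abs_nonneg (max b.2 c.2)
  obtain ⟨m, hm⟩ : ∃ m : ℕ, y = max b.2 c.2 + ((m : ℤ) + 1) :=
    ⟨(y - max b.2 c.2 - 1).toNat, by omega⟩
  have hm1 : 1 ≤ m := by omega
  have hmy : y ≤ 2 * m := by omega
  have hy0 : 0 < (y : ℝ) := by
    have : 0 < y := by omega
    exact_mod_cast this
  have hmyR : (y : ℝ) ≤ 2 * m := by exact_mod_cast hmy
  have hm0 : (0 : ℝ) < m := by exact_mod_cast hm1
  have b1 : D / (m : ℝ) ^ 2 ≤ 4 * D / (y : ℝ) ^ 2 := by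
    rw [div_le_div_iff₀ (by positivity) (by positivity)]
    have : (y : ℝ) ^ 2 ≤ 4 * (m : ℝ) ^ 2 := by nlinarith
    nlinarith
  have b2 : D / ((m + 1 : ℕ) : ℝ) ^ 2 ≤ 4 * D / (y : ℝ) ^ 2 := by
    refine le_trans ?_ b1
    push_cast
    gcongr
    linarith
  have g1 := hD (m + 1) x 1 0 (by omega) (by omega) (by simp)
  have g2 := hD (m + 1) x (-1) 0 (by omega) (by omega) (by simp)
  have g3 := hD (m + 1) x 0 1 (by omega) (by omega) (by simp)
  have g4 := hD m x 0 1 hm1 (by omega) (by simp)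
  have e1 : max b.2 c.2 + ((m + 1 : ℕ) : ℤ) = y := by push_cast; omega
  have e2 : max b.2 c.2 + (m : ℤ) = y - 1 := by omega
  rw [e1] at g1 g2 g3
  rw [e2, abs_sub_comm] at g4
  simp only [Nat.cast_zero, Nat.cast_one, add_zero, sub_add_cancel, ← sub_eq_add_neg] at g1 g2 g3 g4
  simp only [nb, hdiff]
  have f : ∀ t : ℝ, t ≤ 4 * D / (y : ℝ) ^ 2 → t / E ≤ 4 * (D / E) / (y : ℝ) ^ 2 := by
    intro t ht
    calc t / E ≤ (4 * D / (y : ℝ) ^ 2) / E := by gcongr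
      _ = _ := by field_simp
  have r1 := f _ (g1.trans b2)
  have r2 := f _ (g2.trans b2)
  have r3 := f _ (g3.trans b2)
  have r4 := f _ (g4.trans b1)
  rw [mul_div_assoc 4 (4 * (D / E))]
  linarith

lemma nb_equiv (e : (ℤ × ℤ) ≃ (ℤ × ℤ)) (he : ∀ u v, pZ2 (e u) (e v) = pZ2 u v) (b c : ℤ × ℤ)
    (hbc : b ≠ c) (w : ℤ × ℤ → ℤ) (hw : ∀ v, (e v).2 = w v)
    (hn : ∀ (h : ℤ × ℤ → ℝ) v, nb h (e v) = nb (fun u => h (e u)) v) :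
    ∃ C : ℝ, ∃ Y : ℤ, 0 ≤ C ∧ 1 ≤ Y ∧
    ∀ v : ℤ × ℤ, Y ≤ w v → nb (hitProb pZ2 b c) v ≤ C / (w v : ℝ) ^ 2 := by
  obtain ⟨C, Y, hC, hY, H⟩ := nb_up (e b) (e c) (fun h => hbc (e.injective h))
  refine ⟨C, Y, hC, hY, fun v hv => ?_⟩
  have := H (e v) (by rw [hw]; exact hv)
  rw [hw, hn] at this
  have h2 : (fun u => hitProb pZ2 (e b) (e c) (e u)) = hitProb pZ2 b c :=
    funext fun u => hit_equiv e he b c u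
  rw [h2] at this
  exact this

def eNeg : (ℤ × ℤ) ≃ (ℤ × ℤ) where
  toFun v := (v.1, -v.2)
  invFun v := (v.1, -v.2)
  left_inv v := by simp
  right_inv v := by simp

def eSwap : (ℤ × ℤ) ≃ (ℤ × ℤ) where
  toFun v := (v.2, v.1)
  invFun v := (v.2, v.1)
  left_inv v := by simp
  right_inv v := by simp

def eRot : (ℤ × ℤ) ≃ (ℤ × ℤ) where
  toFun v := (v.2, -v.1)
  invFun v := (-v.2, v.1)
  left_inv v := by simp
  right_inv v := by simp

lemma abs_neg_sub_neg' (a b : ℤ) : |(-a) - (-b)| = |a - b| := by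
  rw [show (-a) - (-b) = -(a - b) by ring, abs_neg]

lemma nb_all (b c : ℤ × ℤ) (hbc : b ≠ c) : ∃ C : ℝ, 0 ≤ C ∧
    ∀ v : ℤ × ℤ, nb (hitProb pZ2 b c) v ≤ C * (1 / ((ringZ v : ℤ) : ℝ) ^ 2) := by
  obtain ⟨C1, Y1, hC1, hY1, H1⟩ := nb_up b c hbc
  obtain ⟨C2, Y2, hC2, hY2, H2⟩ := nb_equiv eNeg
    (by intro u v; simp only [pZ2, eNeg, Equiv.coe_fn_mk, abs_neg_sub_neg']) b c hbc
    (fun v => -v.2) (fun v => rfl) (by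
      intro h v; simp only [nb, eNeg, Equiv.coe_fn_mk, neg_add, neg_sub]
      rw [show -v.2 + -1 = -v.2 - 1 by ring, show 1 - v.2 = -v.2 + 1 by ring]; ring)
  obtain ⟨C3, Y3, hC3, hY3, H3⟩ := nb_equiv eSwap
    (by intro u v; simp only [pZ2, eSwap, Equiv.coe_fn_mk, add_comm]) b c hbc
    (fun v => v.1) (fun v => rfl) (by
      intro h v; simp only [nb, eSwap, Equiv.coe_fn_mk]
      ring)
  obtain ⟨C4, Y4, hC4, hY4, H4⟩ := nb_equiv eRot
    (by intro u v; simp only [pZ2, eRot, Equiv.coe_fn_mk, abs_neg_sub_neg', add_comm]) b c hbc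
    (fun v => -v.1) (fun v => rfl) (by
      intro h v; simp only [nb, eRot, Equiv.coe_fn_mk, neg_add, neg_sub]
      rw [show -v.1 + -1 = -v.1 - 1 by ring, show 1 - v.1 = -v.1 + 1 by ring]; ring)
  set K : ℤ := Y1 + Y2 + Y3 + Y4 with hK
  set S : ℝ := C1 + C2 + C3 + C4 with hS
  have hK0 : (0 : ℝ) ≤ 4 * (K : ℝ) ^ 2 := by positivity
  refine ⟨4 * S + 4 * (K : ℝ) ^ 2, by positivity, ?_⟩
  intro v
  have hr := ringZ_pos v
  have hr0 : (0 : ℝ) < ((ringZ v : ℤ) : ℝ) := by exact_mod_cast hr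
  rw [mul_one_div]
  by_cases hk : K ≤ ringZ v
  · have big : ∀ (C : ℝ) (w : ℤ), 0 ≤ C → C ≤ S → ringZ v - 1 ≤ w →
        C / (w : ℝ) ^ 2 ≤ (4 * S + 4 * (K : ℝ) ^ 2) / ((ringZ v : ℤ) : ℝ) ^ 2 := by
      intro C w hC hCS hw
      have hw1 : 1 ≤ w := by omega
      have hw2 : ringZ v ≤ 2 * w := by omega
      have hw1' : (1 : ℝ) ≤ w := by exact_mod_cast hw1
      have hw2' : ((ringZ v : ℤ) : ℝ) ≤ 2 * w := by exact_mod_cast hw2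
      rw [div_le_div_iff₀ (by positivity) (by positivity)]
      have h3 : ((ringZ v : ℤ) : ℝ) ^ 2 ≤ 4 * (w : ℝ) ^ 2 := by nlinarith
      calc C * ((ringZ v : ℤ) : ℝ) ^ 2 ≤ S * (4 * (w : ℝ) ^ 2) := by
            apply mul_le_mul hCS h3 (by positivity) (hC.trans hCS)
        _ ≤ _ := by nlinarith [mul_nonneg hK0 (sq_nonneg (w : ℝ))]
    have hcase : ringZ v = v.1 ∨ ringZ v = 1 - v.1 ∨ ringZ v = v.2 ∨ ringZ v = 1 - v.2 := by
      unfold ringZ; omega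
    rcases hcase with h | h | h | h
    · exact (H3 v (by show Y3 ≤ v.1; omega)).trans (big C3 v.1 hC3 (by linarith) (by omega))
    · exact (H4 v (by show Y4 ≤ -v.1; omega)).trans (big C4 (-v.1) hC4 (by linarith) (by omega))
    · exact (H1 v (by omega)).trans (big C1 v.2 hC1 (by linarith) (by omega))
    · exact (H2 v (by show Y2 ≤ -v.2; omega)).trans (big C2 (-v.2) hC2 (by linarith) (by omega))
  · push Not at hk
    have h4 : nb (hitProb pZ2 b c) v ≤ 4 := by
      have f : ∀ u w, |hitProb pZ2 b c u - hitProb pZ2 b c w| ≤ 1 := by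
        intro u w
        have h1 := hit_01 b c hbc u
        have h2 := hit_01 b c hbc w
        rw [abs_le]; constructor <;> linarith [h1.1, h1.2, h2.1, h2.2]
      unfold nb
      linarith [f (v.1 + 1, v.2) v, f (v.1 - 1, v.2) v, f (v.1, v.2 + 1) v, f (v.1, v.2 - 1) v]
    refine h4.trans ?_
    rw [le_div_iff₀ (by positivity)]
    have hkR : ((ringZ v : ℤ) : ℝ) ≤ K := by exact_mod_cast hk.le
    have : ((ringZ v : ℤ) : ℝ) ^ 2 ≤ (K : ℝ) ^ 2 := by gcongr
    have hS0 : 0 ≤ S := by positivity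
    linarith

theorem rotor_hitting_prob_Z2 (a b c : ℤ × ℤ) (hbc : b ≠ c) (hab : a ≠ b) (hac : a ≠ c) :
    ∃ C C' : ℝ, ∀ (x : ℕ → ℤ × ℤ) (r : ℕ → ℤ × ℤ → ℕ),
      IsRotorWalk (dMod b c) (succMod a b c) x r →
      (∀ v, r 0 v = rotInit b c v) →
      x 0 = a →
      ∀ t : ℕ, 2 ≤ nvisits x t b + nvisits x t c →
        (|hitProb pZ2 b c a -
            (nvisits x t b : ℝ) / ((nvisits x t b : ℝ) + nvisits x t c)| ≤
          C * Real.log ((nvisits x t b : ℝ) + nvisits x t c) /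
            ((nvisits x t b : ℝ) + nvisits x t c)) ∧
        (t : ℝ) ≤ C' * ((nvisits x t b : ℝ) + nvisits x t c) ^ 3 := by
  refine main_assembly a b c hbc (hitProb pZ2 b c) (hit_01 b c hbc) (hit_b b c hbc)
    (hit_c b c hbc) ?_ ?_
  · intro v hv
    have h := hit_harm b c hbc v hv
    simp only [Finset.sum_range_succ, Finset.sum_range_zero, succZ2_0, succZ2_1, succZ2_2, succZ2_3]
    simp only [avg4] at h
    linarith
  · obtain ⟨C, hC, H⟩ := nb_all b c hbc
    refine ⟨C, hC, fun v => le_trans (le_of_eq ?_) (H v)⟩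
    simp only [Finset.sum_range_succ, Finset.sum_range_zero, succZ2_0, succZ2_1, succZ2_2, succZ2_3,
      nb]
    ring
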